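/- arXiv:2004.01762 — 2 statements merged into one kernel-verified Lean document; each statement's English description precedes it below -/
import Mathlib

section
/- On any oriented pseudo-Riemannian manifold of dimension 2k, the Pontrjagin potential computed from the Weyl tensor equals the one computed from the full Riemann tensor: p_Φ(W) = p_Φ(Rm), where p_Φ(A) := (1/(2k)!) ε^{i₁…i_{2k}} Φ^{t₁…t_k}_{s₁…s_k} A_{t₁}{}^{s₁}{}_{i₁i₂} ⋯ A_{t_k}{}^{s_k}{}_{i_{2k-1}i_{2k}} for any algebraic curvature tensor A. -/
open scoped BigOperators

noncomputable def kron {n : ℕ} (i j : Fin n) : ℝ := if i = j then 1 else 0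

/-- Components of the volume form in an oriented orthonormal frame. -/
noncomputable def vol {n : ℕ} (i : Fin n → Fin n) : ℝ :=
  Matrix.det (Matrix.of fun a b => kron (i a) b)

def d0 {k : ℕ} (a : Fin k) : Fin (2 * k) := ⟨2 * a.val, by have := a.isLt; omega⟩
def d1 {k : ℕ} (a : Fin k) : Fin (2 * k) := ⟨2 * a.val + 1, by have := a.isLt; omega⟩

/-- The Pontrjagin potential `p_Φ(A)` of an algebraic curvature tensor `A` in
dimension `2k`. -/
noncomputable def pPhi {k : ℕ}
    (Φ : (Fin k → Fin (2 * k)) → (Fin k → Fin (2 * k)) → ℝ)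
    (A : Fin (2 * k) → Fin (2 * k) → Fin (2 * k) → Fin (2 * k) → ℝ) : ℝ :=
  (1 / (Nat.factorial (2 * k) : ℝ)) *
    ∑ J : Fin (2 * k) → Fin (2 * k), vol J *
      ∑ t : Fin k → Fin (2 * k), ∑ s : Fin k → Fin (2 * k),
        Φ t s * ∏ a : Fin k, A (t a) (s a) (J (d0 a)) (J (d1 a))

/-!
Read `A_{ij}` as a matrix of two-forms and let `e` be the coframe. By the invariance of `Φ`, the
potential `p_Φ(A)` is a combination of products `∑ₜ ∏ₐ A_{t(a) t(τ a)}` over permutations `τ`. Write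
`P ⩕ g` as `pᵢ ∧ eⱼ - pⱼ ∧ eᵢ` with the one-forms `pᵢ = P_{ia} eᵃ`, and expand the product
multilinearly. In each term containing a factor `P ⩕ g`, either this factor sits at a fixed point of
`τ`, where it is traced and vanishes by skew-symmetry, or `eⱼ` is contracted with a neighbouring
curvature factor `B`, and the first Bianchi identity says that `∑ⱼ eⱼ ∧ B_{jl} = 0`.
The neighbour may itself be `P ⩕ g`, which satisfies the Bianchi identity because `P` is symmetric.
-/

open Function Equiv

section Kron

variable {n : ℕ}

theorem kron_comm (i j : Fin n) : kron i j = kron j i := by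
  simp only [kron, eq_comm]

variable {α : Type*} [Fintype α] [DecidableEq α]

theorem sum_prod_kron_mul (u : α → Fin n) (f : (α → Fin n) → ℝ) :
    ∑ s : α → Fin n, (∏ a, kron (u a) (s a)) * f s = f u := by
  simp only [kron, Fintype.prod_boole, ← funext_iff, ite_mul, one_mul, zero_mul,
    Finset.sum_ite_eq, Finset.mem_univ, if_true]

/-- The factor `kron (t v) c'`, with `c'` arbitrary, restricts the sum on the right to the
coordinates of `t` other than `v`. -/
theorem sum_kron_mul_eq_sum_kron_mul_update (v : α) (c c' : Fin n) (f : (α → Fin n) → ℝ) :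
    ∑ t : α → Fin n, kron (t v) c * f t = ∑ t, kron (t v) c' * f (update t v c) := by
  have hinv : Involutive fun t : α → Fin n => update t v (swap c c' (t v)) := fun t => by simp
  refine Fintype.sum_equiv hinv.toPerm _ _ fun t => ?_
  have hswap : swap c c' (t v) = c' ↔ t v = c := by
    rw [swap_apply_eq_iff, swap_apply_right]
  by_cases h : t v = c
  · simp [kron, ← h]
  · simp [kron, hswap, h]

end Kron

section Vol

variable {n : ℕ}

theorem vol_comp_perm (σ : Perm (Fin n)) (J : Fin n → Fin n) :
    vol (J ∘ σ) = Perm.sign σ * vol J :=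
  Matrix.det_permute σ (Matrix.of fun a b => kron (J a) b)

theorem sum_vol_mul_comp_perm (σ : Perm (Fin n)) (f : (Fin n → Fin n) → ℝ) :
    ∑ J, vol J * f (J ∘ σ) = Perm.sign σ * ∑ J, vol J * f J := by
  rw [← (σ.symm.arrowCongr (Equiv.refl (Fin n))).sum_comp fun J => vol J * f J, Finset.mul_sum]
  refine Finset.sum_congr rfl fun J _ => ?_
  have hJ : σ.symm.arrowCongr (Equiv.refl (Fin n)) J = J ∘ σ := rfl
  have hsign : (Perm.sign σ : ℝ) * Perm.sign σ = 1 := by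
    rw [← Int.cast_mul, ← Units.val_mul, Int.units_mul_self, Units.val_one, Int.cast_one]
  rw [hJ, vol_comp_perm, ← mul_assoc, ← mul_assoc, hsign, one_mul]

theorem sum_vol_mul_eq_zero_of_sum_comp_eq_zero {σ : Perm (Fin n)} (hσ : Perm.sign σ = 1)
    {f : (Fin n → Fin n) → ℝ} (hf : ∀ J, f J + f (J ∘ σ) + f ((J ∘ σ) ∘ σ) = 0) :
    ∑ J, vol J * f J = 0 := by
  have hinv (g : (Fin n → Fin n) → ℝ) : ∑ J, vol J * g (J ∘ σ) = ∑ J, vol J * g J := by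
    simp [sum_vol_mul_comp_perm, hσ]
  have htriple : ∑ J, vol J * (f J + f (J ∘ σ) + f ((J ∘ σ) ∘ σ)) = 3 * ∑ J, vol J * f J := by
    simp only [mul_add, Finset.sum_add_distrib, hinv fun J => f (J ∘ σ), hinv f]
    ring
  simpa [hf] using htriple

/-- This is `∑ⱼ eⱼ ∧ Bⱼ = 0`: contracting the coframe index in slot `p` with the first index of `D`
antisymmetrizes `D` over the slots `p`, `q`, `r`. -/
theorem sum_vol_mul_sum_kron_mul_eq_zero {α : Type*} [Fintype α] [DecidableEq α]
    {p q r : Fin n} (hpq : p ≠ q) (hqr : q ≠ r) (hpr : p ≠ r) (v : α)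
    {D : (Fin n → Fin n) → (α → Fin n) → Fin n → Fin n → Fin n → ℝ}
    (hDJ : ∀ t, DependsOn (fun J => D J t) {p, q, r}ᶜ)
    (hDt : ∀ J, DependsOn (D J) {v}ᶜ)
    (hD : ∀ J t i a b, D J t i a b + D J t a b i + D J t b i a = 0) :
    ∑ J, vol J * ∑ t : α → Fin n, kron (t v) (J p) * D J t (t v) (J q) (J r) = 0 := by
  let σ : Perm (Fin n) := swap p q * swap q r
  have hσ : Perm.sign σ = 1 := by simp [σ, Perm.sign_swap hpq, Perm.sign_swap hqr]
  have hσp : σ p = q := by simp [σ, swap_apply_of_ne_of_ne hpq hpr]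
  have hσq : σ q = r := by simp [σ, swap_apply_of_ne_of_ne hpr.symm hqr.symm]
  have hσr : σ r = p := by simp [σ]
  have hDσ (J t) : D (J ∘ σ) t = D J t := by
    refine hDJ t fun x hx => ?_
    simp only [Set.mem_compl_iff, Set.mem_insert_iff, Set.mem_singleton_iff, not_or] at hx
    simp [σ, swap_apply_of_ne_of_ne, hx]
  have hcontract (J c a b c') : ∑ t : α → Fin n, kron (t v) c * D J t (t v) a b =
      ∑ t, kron (t v) c' * D J t c a b := by
    have hupd (t : α → Fin n) : D J (update t v c) = D J t :=
      hDt J fun x hx => update_of_ne hx _ _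
    simp only [sum_kron_mul_eq_sum_kron_mul_update v c c' fun t => D J t (t v) a b, hupd,
      update_self]
  refine sum_vol_mul_eq_zero_of_sum_comp_eq_zero hσ fun J => ?_
  simp only [comp_apply, hσp, hσq, hσr, hDσ, hcontract J _ _ _ p, ← Finset.sum_add_distrib,
    ← mul_add, hD, mul_zero, Finset.sum_const_zero]

end Vol

section Slots

variable {k : ℕ} {a b : Fin k}

theorem d0_injective : Injective (d0 : Fin k → Fin (2 * k)) := fun a b h => by
  simpa [d0, Fin.ext_iff] using h

theorem d1_injective : Injective (d1 : Fin k → Fin (2 * k)) := fun a b h => by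
  simpa [d1, Fin.ext_iff] using h

theorem d0_ne_d1 : d0 a ≠ d1 b := by
  simp only [d0, d1, ne_eq, Fin.ext_iff]
  omega

end Slots

/-- Components `A_{ijab}` of a covariant four-tensor in a frame of an `n`-dimensional space. -/
abbrev FourTensor (n : ℕ) : Type := Fin n → Fin n → Fin n → Fin n → ℝ

/-- The symmetries of a Riemann curvature tensor. Skew-symmetry in the last pair of indices follows
from the first two. -/
structure IsAlgebraicCurvature {n : ℕ} (A : FourTensor n) : Prop where
  skew : ∀ i j a b, A i j a b = -A j i a b
  pair_symm : ∀ i j a b, A i j a b = A a b i j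
  bianchi : ∀ i j a b, A i j a b + A j a i b + A a i j b = 0

/-- The Kulkarni–Nomizu product `P ⩕ g`, where `g` is the metric of an orthonormal frame. -/
noncomputable def kulkarniNomizu {n : ℕ} (P : Fin n → Fin n → ℝ) : FourTensor n :=
  fun i j a b => P i a * kron j b - P i b * kron j a + P j b * kron i a - P j a * kron i b

section Curvature

variable {n : ℕ}

theorem IsAlgebraicCurvature.cyclic_left {A : FourTensor n} (hA : IsAlgebraicCurvature A)
    (i j a b : Fin n) : A i j a b + A a j b i + A b j i a = 0 := by
  linarith [hA.bianchi a b i j, hA.pair_symm i j a b, hA.pair_symm a j b i, hA.pair_symm b j i a]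

theorem IsAlgebraicCurvature.cyclic_right {A : FourTensor n} (hA : IsAlgebraicCurvature A)
    (i j a b : Fin n) : A j i a b + A j a b i + A j b i a = 0 := by
  linarith [hA.cyclic_left i j a b, hA.skew i j a b, hA.skew a j b i, hA.skew b j i a]

theorem add_kulkarniNomizu (A : FourTensor n) (P : Fin n → Fin n → ℝ) :
    A + kulkarniNomizu P = fun i j a b => A i j a b + P i a * kron j b - P i b * kron j a
      + P j b * kron i a - P j a * kron i b := by
  ext i j a b
  simp only [kulkarniNomizu, Pi.add_apply]
  ring

theorem kulkarniNomizu_self (P : Fin n → Fin n → ℝ) (i a b : Fin n) :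
    kulkarniNomizu P i i a b = 0 := by
  simp only [kulkarniNomizu]
  ring

theorem isAlgebraicCurvature_kulkarniNomizu {P : Fin n → Fin n → ℝ} (hP : ∀ i j, P i j = P j i) :
    IsAlgebraicCurvature (kulkarniNomizu P) where
  skew i j a b := by
    simp only [kulkarniNomizu]
    ring
  pair_symm i j a b := by
    simp only [kulkarniNomizu, hP a, hP b, kron_comm a, kron_comm b]
    ring
  bianchi i j a b := by
    simp only [kulkarniNomizu, hP j i, hP a, kron_comm j i, kron_comm a]
    ring

end Curvature

section PermContraction

variable {k : ℕ}

/-- The contraction `∑ ε^J ∏ₐ (Bₐ)_{t(a) t(τ a) J(2a) J(2a+1)}` of `k` four-tensors: the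
product, over the cycles of `τ`, of the traces of the products of the matrices of two-forms `Bₐ`.
Admitting different tensors `Bₐ` makes it multilinear. -/
noncomputable def permContraction (τ : Perm (Fin k)) :
    MultilinearMap ℝ (fun _ : Fin k => FourTensor (2 * k)) ℝ :=
  ∑ J, vol J • ∑ t : Fin k → Fin (2 * k),
    (MultilinearMap.mkPiAlgebra ℝ (Fin k) ℝ).compLinearMap fun a =>
      { toFun := fun A => A (t a) (t (τ a)) (J (d0 a)) (J (d1 a))
        map_add' := fun _ _ => rfl
        map_smul' := fun _ _ => rfl }

theorem permContraction_apply (τ : Perm (Fin k)) (B : Fin k → FourTensor (2 * k)) :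
    permContraction τ B = ∑ J, vol J * ∑ t : Fin k → Fin (2 * k),
      ∏ a, B a (t a) (t (τ a)) (J (d0 a)) (J (d1 a)) := by
  simp [permContraction]

theorem permContraction_inv (τ : Perm (Fin k)) (B : Fin k → FourTensor (2 * k)) :
    permContraction τ⁻¹ (fun x i j => B x j i) = permContraction τ B := by
  simp only [permContraction_apply]
  refine Finset.sum_congr rfl fun J _ => congrArg (vol J * ·) ?_
  refine Fintype.sum_equiv (τ.arrowCongr (Equiv.refl _)) _ _ fun t => ?_
  simp [arrowCongr]

theorem permContraction_update_swap (τ : Perm (Fin k)) (B : Fin k → FourTensor (2 * k))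
    (x : Fin k) (A : FourTensor (2 * k)) :
    permContraction τ (update B x fun i j a b => A i j b a) =
      -permContraction τ (update B x A) := by
  have hsign : Perm.sign (swap (d0 x) (d1 x)) = -1 := Perm.sign_swap d0_ne_d1
  have hreindex := sum_vol_mul_comp_perm (swap (d0 x) (d1 x)) fun J =>
    ∑ t : Fin k → Fin (2 * k), ∏ a, update B x A a (t a) (t (τ a)) (J (d0 a)) (J (d1 a))
  rw [hsign, ← permContraction_apply, Units.val_neg, Units.val_one, Int.cast_neg, Int.cast_one,
    neg_one_mul] at hreindex
  rw [permContraction_apply, ← hreindex]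
  refine Finset.sum_congr rfl fun J _ => congrArg (vol J * ·) ?_
  refine Finset.sum_congr rfl fun t _ => Finset.prod_congr rfl fun a _ => ?_
  obtain rfl | hax := eq_or_ne a x
  · simp
  · simp [hax, swap_apply_of_ne_of_ne, d0_injective.ne hax, d1_injective.ne hax, d0_ne_d1,
      d0_ne_d1.symm]

theorem dependsOn_prod_slots (τ : Perm (Fin k)) (B : Fin k → FourTensor (2 * k))
    (s : Finset (Fin k)) (t : Fin k → Fin (2 * k)) :
    DependsOn (fun J : Fin (2 * k) → Fin (2 * k) =>
      ∏ a ∈ s, B a (t a) (t (τ a)) (J (d0 a)) (J (d1 a))) (d0 '' s ∪ d1 '' s) :=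
  fun J J' h => Finset.prod_congr rfl fun a ha => by
    rw [h _ (.inl (Set.mem_image_of_mem d0 ha)), h _ (.inr (Set.mem_image_of_mem d1 ha))]

theorem dependsOn_prod_indices (τ : Perm (Fin k)) (B : Fin k → FourTensor (2 * k))
    (s : Finset (Fin k)) (J : Fin (2 * k) → Fin (2 * k)) :
    DependsOn (fun t : Fin k → Fin (2 * k) =>
      ∏ a ∈ s, B a (t a) (t (τ a)) (J (d0 a)) (J (d1 a))) (s ∪ τ '' s) :=
  fun t t' h => Finset.prod_congr rfl fun a ha => by
    rw [h a (.inl ha), h (τ a) (.inr (Set.mem_image_of_mem τ ha))]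

theorem prod_update_eq_mul_mul_prod_compl {τ : Perm (Fin k)} {x y : Fin k} (hxy : x ≠ y)
    (B : Fin k → FourTensor (2 * k)) (A : FourTensor (2 * k))
    (J : Fin (2 * k) → Fin (2 * k)) (t : Fin k → Fin (2 * k)) :
    ∏ a, update B x A a (t a) (t (τ a)) (J (d0 a)) (J (d1 a)) =
      A (t x) (t (τ x)) (J (d0 x)) (J (d1 x)) * B y (t y) (t (τ y)) (J (d0 y)) (J (d1 y)) *
        ∏ a ∈ {x, y}ᶜ, B a (t a) (t (τ a)) (J (d0 a)) (J (d1 a)) := by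
  rw [← Finset.prod_mul_prod_compl {x, y}, Finset.prod_pair hxy, update_self,
    update_of_ne hxy.symm]
  refine congrArg _ (Finset.prod_congr rfl fun a ha => ?_)
  rw [update_of_ne fun h => by simp [h] at ha]

/-- The term `pᵢ ∧ eⱼ`, with `eⱼ` contracted into the next factor. -/
theorem permContraction_update_mul_kron_right_eq_zero {τ : Perm (Fin k)} {x : Fin k} (hx : τ x ≠ x)
    {B : Fin k → FourTensor (2 * k)}
    (hB : ∀ i j a b, B (τ x) i j a b + B (τ x) a j b i + B (τ x) b j i a = 0)
    (P : Fin (2 * k) → Fin (2 * k) → ℝ) :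
    permContraction τ (update B x fun i j a b => P i a * kron j b) = 0 := by
  let rest (J : Fin (2 * k) → Fin (2 * k)) (t : Fin k → Fin (2 * k)) : ℝ :=
    ∏ a ∈ {x, τ x}ᶜ, B a (t a) (t (τ a)) (J (d0 a)) (J (d1 a))
  let D (J : Fin (2 * k) → Fin (2 * k)) (t : Fin k → Fin (2 * k)) (i a b : Fin (2 * k)) : ℝ :=
    P (t x) (J (d0 x)) * B (τ x) i (t (τ (τ x))) a b * rest J t
  have hprod (J t) : ∏ a, update B x (fun i j a b => P i a * kron j b) a
      (t a) (t (τ a)) (J (d0 a)) (J (d1 a)) =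
        kron (t (τ x)) (J (d1 x)) * D J t (t (τ x)) (J (d0 (τ x))) (J (d1 (τ x))) := by
    rw [prod_update_eq_mul_mul_prod_compl hx.symm]
    ring
  have hDJ (t) : DependsOn (fun J => D J t) {d1 x, d0 (τ x), d1 (τ x)}ᶜ := by
    intro J J' hJ
    have hP : J (d0 x) = J' (d0 x) := hJ _ (by simp [d0_ne_d1, d0_injective.ne hx.symm])
    have hrest : rest J t = rest J' t := by
      refine dependsOn_prod_slots τ B _ t fun y hy => hJ y ?_
      rcases hy with ⟨a, ha, rfl⟩ | ⟨a, ha, rfl⟩ <;>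
        simp_all [d0_ne_d1, d0_ne_d1.symm, d0_injective.eq_iff, d1_injective.eq_iff]
    simp only [D, hP, hrest]
  have hDt (J) : DependsOn (D J) {τ x}ᶜ := by
    intro t t' ht
    have hrest : rest J t = rest J t' := by
      refine dependsOn_prod_indices τ B _ J fun y hy => ht y ?_
      rcases hy with hy | ⟨a, ha, rfl⟩ <;> simp_all
    simp only [D, ht x hx.symm, ht (τ (τ x)) (τ.injective.ne hx), hrest]
  simp only [permContraction_apply, hprod]
  refine sum_vol_mul_sum_kron_mul_eq_zero d0_ne_d1.symm d0_ne_d1 (d1_injective.ne hx.symm) (τ x)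
    hDJ hDt fun J t i a b => ?_
  linear_combination P (t x) (J (d0 x)) * rest J t * hB i (t (τ (τ x))) a b

/-- The term `pⱼ ∧ eᵢ`, with `eᵢ` contracted into the previous factor. -/
theorem permContraction_update_mul_kron_left_eq_zero {τ : Perm (Fin k)} {x : Fin k} (hx : τ x ≠ x)
    {B : Fin k → FourTensor (2 * k)}
    (hB : ∀ i j a b, B (τ⁻¹ x) j i a b + B (τ⁻¹ x) j a b i + B (τ⁻¹ x) j b i a = 0)
    (P : Fin (2 * k) → Fin (2 * k) → ℝ) :
    permContraction τ (update B x fun i j a b => P j a * kron i b) = 0 := by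
  have hx' : τ⁻¹ x ≠ x := fun h => hx (Perm.inv_eq_iff_eq.1 h).symm
  rw [← permContraction_inv,
    ← permContraction_update_mul_kron_right_eq_zero (B := fun y i j => B y j i) hx' hB P]
  congr 1
  ext y i j a b
  obtain rfl | hy := eq_or_ne y x
  · simp
  · simp [hy]

theorem permContraction_update_kulkarniNomizu_eq_zero {τ : Perm (Fin k)} {x : Fin k}
    {B : Fin k → FourTensor (2 * k)} (hB : ∀ y, IsAlgebraicCurvature (B y))
    (P : Fin (2 * k) → Fin (2 * k) → ℝ) :
    permContraction τ (update B x (kulkarniNomizu P)) = 0 := by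
  by_cases hx : τ x = x
  · rw [permContraction_apply]
    refine Finset.sum_eq_zero fun J _ => mul_eq_zero_of_right _ <| Finset.sum_eq_zero fun t _ =>
      Finset.prod_eq_zero (Finset.mem_univ x) ?_
    rw [update_self, hx, kulkarniNomizu_self]
  · let pe : FourTensor (2 * k) := fun i j a b => P i a * kron j b
    let ep : FourTensor (2 * k) := fun i j a b => P j a * kron i b
    have hsplit : kulkarniNomizu P = (pe - ep) - fun i j a b => (pe - ep) i j b a := by
      ext i j a b
      simp only [kulkarniNomizu, pe, ep, Pi.sub_apply]
      ring
    have hpe : permContraction τ (update B x pe) = 0 :=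
      permContraction_update_mul_kron_right_eq_zero hx (hB (τ x)).cyclic_left P
    have hep : permContraction τ (update B x ep) = 0 :=
      permContraction_update_mul_kron_left_eq_zero hx (hB (τ⁻¹ x)).cyclic_right P
    rw [hsplit, MultilinearMap.map_update_sub, permContraction_update_swap τ B x (pe - ep),
      MultilinearMap.map_update_sub, hpe, hep, sub_zero, neg_zero, sub_zero]

theorem permContraction_add_kulkarniNomizu (τ : Perm (Fin k)) {A : FourTensor (2 * k)}
    (hA : IsAlgebraicCurvature A) {P : Fin (2 * k) → Fin (2 * k) → ℝ}
    (hP : ∀ i j, P i j = P j i) :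
    permContraction τ (fun _ => A + kulkarniNomizu P) = permContraction τ fun _ => A := by
  let mixed (s : Finset (Fin k)) : Fin k → FourTensor (2 * k) :=
    s.piecewise (fun _ => A) fun _ => kulkarniNomizu P
  have hmixed (s y) : IsAlgebraicCurvature (mixed s y) := by
    by_cases hy : y ∈ s
    · simpa [mixed, hy] using hA
    · simpa [mixed, hy] using isAlgebraicCurvature_kulkarniNomizu hP
  calc permContraction τ (fun _ => A + kulkarniNomizu P)
      = ∑ s, permContraction τ (mixed s) := (permContraction τ).map_add_univ _ _
    _ = permContraction τ (mixed Finset.univ) := by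
        refine Fintype.sum_eq_single _ fun s hs => ?_
        obtain ⟨x, hx⟩ : ∃ x, x ∉ s := by simpa [Finset.eq_univ_iff_forall] using hs
        have hsx : update (mixed s) x (kulkarniNomizu P) = mixed s :=
          update_eq_self_iff.2 (by simp [mixed, hx])
        rw [← hsx, permContraction_update_kulkarniNomizu_eq_zero (hmixed s)]
    _ = permContraction τ fun _ => A := by simp only [mixed, Finset.piecewise_univ]

theorem pPhi_eq_sum_permContraction {Φ : (Fin k → Fin (2 * k)) → (Fin k → Fin (2 * k)) → ℝ}
    {c : Perm (Fin k) → ℝ} (hΦ : ∀ t s, Φ t s = ∑ τ, c τ * ∏ a, kron (t (τ a)) (s a))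
    (A : FourTensor (2 * k)) :
    pPhi Φ A = 1 / (Nat.factorial (2 * k) : ℝ) * ∑ τ, c τ * permContraction τ fun _ => A := by
  have hcontract (J t : _ → Fin (2 * k)) :
      ∑ s, Φ t s * ∏ a, A (t a) (s a) (J (d0 a)) (J (d1 a)) =
        ∑ τ, c τ * ∏ a, A (t a) (t (τ a)) (J (d0 a)) (J (d1 a)) := by
    simp only [hΦ, Finset.sum_mul, mul_assoc]
    rw [Finset.sum_comm]
    refine Finset.sum_congr rfl fun τ _ => ?_
    rw [← Finset.mul_sum, sum_prod_kron_mul fun a => t (τ a)]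
  simp only [pPhi, hcontract, permContraction_apply]
  congr 1
  simp only [Finset.mul_sum]
  rw [Finset.sum_comm (s := (Finset.univ : Finset (Perm (Fin k))))]
  refine Finset.sum_congr rfl fun J _ => ?_
  rw [Finset.sum_comm]
  simp only [mul_left_comm]

end PermContraction

theorem pPhi_weyl_eq_pPhi_riemann_general {k : ℕ}
    {Φ : (Fin k → Fin (2 * k)) → (Fin k → Fin (2 * k)) → ℝ}
    (hΦ : ∃ c : Perm (Fin k) → ℝ, ∀ t s, Φ t s = ∑ τ, c τ * ∏ a, kron (t (τ a)) (s a))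
    {A : FourTensor (2 * k)} (hA : IsAlgebraicCurvature A)
    {P : Fin (2 * k) → Fin (2 * k) → ℝ} (hP : ∀ i j, P i j = P j i) :
    pPhi Φ (A + kulkarniNomizu P) = pPhi Φ A := by
  obtain ⟨c, hc⟩ := hΦ
  simp only [pPhi_eq_sum_permContraction hc, permContraction_add_kulkarniNomizu _ hA hP]

/-- on any oriented pseudo-Riemannian manifold of dimension `2k`,
`p_Φ(W) = p_Φ(Rm)`: the Pontrjagin potential of the Weyl tensor equals that of the
full Riemann tensor `R = W + P ⩕ g` (Kulkarni–Nomizu product with the Schouten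
tensor `P`); pointwise in an oriented orthonormal frame. -/
theorem pPhi_weyl_eq_pPhi_riemann (k : ℕ)
    (Φ : (Fin k → Fin (2 * k)) → (Fin k → Fin (2 * k)) → ℝ)
    (hΦinv : ∃ c : Equiv.Perm (Fin k) → ℝ, ∀ t s,
      Φ t s = ∑ τ : Equiv.Perm (Fin k), c τ * ∏ a : Fin k, kron (t (τ a)) (s a))
    (hΦsym : ∀ (σ : Equiv.Perm (Fin k)) t s, Φ (t ∘ σ) (s ∘ σ) = Φ t s)
    (W : Fin (2 * k) → Fin (2 * k) → Fin (2 * k) → Fin (2 * k) → ℝ)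
    (hW1 : ∀ a b c d, W a b c d = - W b a c d)
    (hW2 : ∀ a b c d, W a b c d = - W a b d c)
    (hW3 : ∀ a b c d, W a b c d = W c d a b)
    (hWB : ∀ a b c d, W a b c d + W b c a d + W c a b d = 0)
    (hWtf : ∀ a c, ∑ s, W a s c s = 0)
    (P : Fin (2 * k) → Fin (2 * k) → ℝ) (hP : ∀ i j, P i j = P j i) :
    pPhi Φ (fun i j a b => W i j a b + P i a * kron j b - P i b * kron j a
      + P j b * kron i a - P j a * kron i b) = pPhi Φ W := by
  rw [← add_kulkarniNomizu, pPhi_weyl_eq_pPhi_riemann_general hΦinv ⟨hW1, hW3, hWB⟩ hP]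
end

section
/- On a pseudo-Riemannian manifold of dimension n = 2k, the divergence of the tensor Ω^{(k)} (defined as in Theorem 'pfaffian') satisfies ∇^j Ω^{(k)}_{ij} = (2k/k!) δ^{j j₂…j_{2k}}_{i i₂…i_{2k}} C_{j j₂}{}^{i₂} W_{j₃j₄}{}^{i₃i₄} ⋯ W_{j_{2k−1}j_{2k}}{}^{i_{2k−1}i_{2k}}. Consequently 2k ξ^{(k)}_i = ∇^j (tf Ω^{(k)})_{ij} + (1/(2k)) ∇_i Pf^{(k)}(Rm), where (tf Ω^{(k)})_{ij} = Ω^{(k)}_{ij} − (1/(2k)) (tr Ω^{(k)}) g_{ij}. -/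
open scoped BigOperators

noncomputable def gdelta {n m : ℕ} (j i : Fin m → Fin n) : ℝ :=
  Matrix.det (Matrix.of fun a b => kron (j a) (i b))

def e1 {K : ℕ} (a : Fin K) : Fin (2 * K + 1) := ⟨2 * a.val + 1, by have := a.isLt; omega⟩
def e2 {K : ℕ} (a : Fin K) : Fin (2 * K + 1) := ⟨2 * a.val + 2, by have := a.isLt; omega⟩

noncomputable def alt3 {n : ℕ} (T : Fin n → Fin n → Fin n → ℝ) (i j k : Fin n) : ℝ :=
  (1 / 6 : ℝ) * ∑ σ : Equiv.Perm (Fin 3),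
    ((Equiv.Perm.sign σ : ℤ) : ℝ) * T (![i, j, k] (σ 0)) (![i, j, k] (σ 1)) (![i, j, k] (σ 2))

noncomputable def alt2 {n : ℕ} (T : Fin n → Fin n → ℝ) (l m : Fin n) : ℝ :=
  (1 / 2 : ℝ) * (T l m - T m l)

/-- `Pf^{(k)}(A)`. -/
noncomputable def PfA {n k : ℕ} (A : Fin n → Fin n → Fin n → Fin n → ℝ) : ℝ :=
  (1 / (Nat.factorial k : ℝ)) *
    ∑ js : Fin (2 * k) → Fin n, ∑ is : Fin (2 * k) → Fin n,
      gdelta js is * ∏ a : Fin k, A (js (d0 a)) (js (d1 a)) (is (d0 a)) (is (d1 a))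

/-- `∇_e Pf^{(k)}(A)` by the Leibniz rule, from `DA = ∇A`. -/
noncomputable def DPfA {n k : ℕ} (A : Fin n → Fin n → Fin n → Fin n → ℝ)
    (DA : Fin n → Fin n → Fin n → Fin n → Fin n → ℝ) (e : Fin n) : ℝ :=
  (1 / (Nat.factorial k : ℝ)) *
    ∑ js : Fin (2 * k) → Fin n, ∑ is : Fin (2 * k) → Fin n,
      gdelta js is * ∑ w : Fin k,
        DA e (js (d0 w)) (js (d1 w)) (is (d0 w)) (is (d1 w)) *
          ∏ b ∈ Finset.univ.erase w, A (js (d0 b)) (js (d1 b)) (is (d0 b)) (is (d1 b))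

/-- The tensor `Ω^{(k)}` of Theorem `pfaffian`. -/
noncomputable def OmegaT {n k : ℕ} (W : Fin n → Fin n → Fin n → Fin n → ℝ)
    (P : Fin n → Fin n → ℝ) (i j : Fin n) : ℝ :=
  ∑ ℓ : Fin k, (4 : ℝ) ^ (k - ℓ.val) * (1 / ((Nat.factorial ℓ.val : ℝ) * ((k : ℝ) - (ℓ.val : ℝ)))) *
    ∑ js : Fin (k + ℓ.val) → Fin n, ∑ is : Fin (k + ℓ.val) → Fin n,
      gdelta (Fin.cons j js) (Fin.cons i is) *
        (∏ a : Fin ℓ.val,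
          W (js ⟨2 * a.val, by have := a.isLt; have := ℓ.isLt; omega⟩)
            (js ⟨2 * a.val + 1, by have := a.isLt; have := ℓ.isLt; omega⟩)
            (is ⟨2 * a.val, by have := a.isLt; have := ℓ.isLt; omega⟩)
            (is ⟨2 * a.val + 1, by have := a.isLt; have := ℓ.isLt; omega⟩)) *
        (∏ b : Fin (k - ℓ.val),
          P (js ⟨2 * ℓ.val + b.val, by have := b.isLt; have := ℓ.isLt; omega⟩)
            (is ⟨2 * ℓ.val + b.val, by have := b.isLt; have := ℓ.isLt; omega⟩))

/-- `∇_e (Ω^{(k)})_i^j` by the Leibniz rule, from `DW = ∇W` and `DP = ∇P`. -/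
noncomputable def DOmegaT {n k : ℕ} (W : Fin n → Fin n → Fin n → Fin n → ℝ)
    (P : Fin n → Fin n → ℝ)
    (DW : Fin n → Fin n → Fin n → Fin n → Fin n → ℝ)
    (DP : Fin n → Fin n → Fin n → ℝ) (e : Fin n) (i j : Fin n) : ℝ :=
  ∑ ℓ : Fin k, (4 : ℝ) ^ (k - ℓ.val) * (1 / ((Nat.factorial ℓ.val : ℝ) * ((k : ℝ) - (ℓ.val : ℝ)))) *
    ∑ js : Fin (k + ℓ.val) → Fin n, ∑ is : Fin (k + ℓ.val) → Fin n,
      gdelta (Fin.cons j js) (Fin.cons i is) *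
        ((∑ w : Fin ℓ.val,
          DW e (js ⟨2 * w.val, by have := w.isLt; have := ℓ.isLt; omega⟩)
            (js ⟨2 * w.val + 1, by have := w.isLt; have := ℓ.isLt; omega⟩)
            (is ⟨2 * w.val, by have := w.isLt; have := ℓ.isLt; omega⟩)
            (is ⟨2 * w.val + 1, by have := w.isLt; have := ℓ.isLt; omega⟩) *
            (∏ a ∈ Finset.univ.erase w,
              W (js ⟨2 * a.val, by have := a.isLt; have := ℓ.isLt; omega⟩)
                (js ⟨2 * a.val + 1, by have := a.isLt; have := ℓ.isLt; omega⟩)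
                (is ⟨2 * a.val, by have := a.isLt; have := ℓ.isLt; omega⟩)
                (is ⟨2 * a.val + 1, by have := a.isLt; have := ℓ.isLt; omega⟩)) *
            (∏ b : Fin (k - ℓ.val),
              P (js ⟨2 * ℓ.val + b.val, by have := b.isLt; have := ℓ.isLt; omega⟩)
                (is ⟨2 * ℓ.val + b.val, by have := b.isLt; have := ℓ.isLt; omega⟩)))
        + (∑ p : Fin (k - ℓ.val),
          DP e (js ⟨2 * ℓ.val + p.val, by have := p.isLt; have := ℓ.isLt; omega⟩)
            (is ⟨2 * ℓ.val + p.val, by have := p.isLt; have := ℓ.isLt; omega⟩) *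
            (∏ a : Fin ℓ.val,
              W (js ⟨2 * a.val, by have := a.isLt; have := ℓ.isLt; omega⟩)
                (js ⟨2 * a.val + 1, by have := a.isLt; have := ℓ.isLt; omega⟩)
                (is ⟨2 * a.val, by have := a.isLt; have := ℓ.isLt; omega⟩)
                (is ⟨2 * a.val + 1, by have := a.isLt; have := ℓ.isLt; omega⟩)) *
            (∏ b ∈ Finset.univ.erase p,
              P (js ⟨2 * ℓ.val + b.val, by have := b.isLt; have := ℓ.isLt; omega⟩)
                (is ⟨2 * ℓ.val + b.val, by have := b.isLt; have := ℓ.isLt; omega⟩))))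

/-- The first term of `ξ^{(k)}` (`k = K+1`). -/
noncomputable def xiTerm1 {n K : ℕ} (W : Fin n → Fin n → Fin n → Fin n → ℝ)
    (C : Fin n → Fin n → Fin n → ℝ) (i : Fin n) : ℝ :=
  (1 / (Nat.factorial (K + 1) : ℝ)) *
    ∑ j : Fin n, ∑ J : Fin (2 * K + 1) → Fin n, ∑ I : Fin (2 * K + 1) → Fin n,
      gdelta (Fin.cons j J) (Fin.cons i I) * C j (J 0) (I 0) *
        ∏ a : Fin K, W (J (e1 a)) (J (e2 a)) (I (e1 a)) (I (e2 a))

/-!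
Assign to `A_{ab}{}^{cd}` and `B_a{}^c` the double forms `∑ A_{ab}{}^{cd} (eᵃ ⊗ e_c)(eᵇ ⊗ e_d)` and
`∑ B_a{}^c eᵃ ⊗ e_c`. They live in a commutative algebra, and contraction with a generalized
Kronecker delta is a linear functional `τ` on it; for the metric `g` and `y` of bidegree `(m, m)`
one has `τ (g y) = (n - m) τ y`.

Up to its coefficient, the `l`-th summand of `∇^j Ω_{ij}` is `τ` of the derivative of `WˡPᵏ⁻ˡ` with
`∇` antisymmetrized against the form indices. The Bianchi identities turn antisymmetrized `∇P` into
half the Cotton form `C`, and antisymmetrized `∇W` into `-2 g C`. The factor `g` is absorbed by `τ`,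
the sum over `l` telescopes, and the term `C Wᵏ⁻¹` survives.

The double form of the curvature is `Rm = W + 4 g P`. Expanding `τ(Rmᵏ) / k!` by the binomial
theorem and absorbing the powers of `g` gives `Pf(W) + tr Ω`, which yields the formula for `ξ`.
-/

section MultiDelta

variable {n : ℕ} {ι ι' : Type*} [Fintype ι] [DecidableEq ι] [Fintype ι'] [DecidableEq ι']

/-- The generalized Kronecker delta `δ^j_i` of two families of indices. It extends `gdelta` from
`Fin m` to arbitrary finite index types, so that families can be concatenated and reindexed. -/
noncomputable def multiDelta (j i : ι → Fin n) : ℝ :=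
  Matrix.det (Matrix.of fun a b => kron (j a) (i b))

lemma multiDelta_comp_equiv (e : ι ≃ ι') (j i : ι' → Fin n) :
    multiDelta (j ∘ e) (i ∘ e) = multiDelta j i :=
  Matrix.det_submatrix_equiv_self e (Matrix.of fun a b => kron (j a) (i b))

lemma multiDelta_comp_perm_left (σ : Equiv.Perm ι) (j i : ι → Fin n) :
    multiDelta (j ∘ σ) i = ((Equiv.Perm.sign σ : ℤ) : ℝ) * multiDelta j i :=
  Matrix.det_permute σ (Matrix.of fun a b => kron (j a) (i b))

lemma multiDelta_comp_perm_right (σ : Equiv.Perm ι) (j i : ι → Fin n) :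
    multiDelta j (i ∘ σ) = ((Equiv.Perm.sign σ : ℤ) : ℝ) * multiDelta j i :=
  Matrix.det_permute' σ (Matrix.of fun a b => kron (j a) (i b))

lemma sum_kron_mul (b : Fin n) (f : Fin n → ℝ) : ∑ a, kron a b * f a = f b := by
  simp [kron]

lemma cons_comp_succAbove_succ {α : Type*} {m : ℕ} (i : Fin m → α) (c : Fin m) :
    (Fin.cons (i c) i : Fin (m + 1) → α) ∘ c.succ.succAbove = i ∘ c.cycleRange.symm := by
  funext t
  obtain ⟨u, rfl⟩ := c.cycleRange.surjective t
  rw [Function.comp_apply, Function.comp_apply, Fin.succAbove_cycleRange, Equiv.symm_apply_apply]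
  rcases eq_or_ne u c with rfl | hu
  · simp
  · rw [Equiv.swap_apply_of_ne_of_ne (Fin.succ_ne_zero _) (by simpa using hu), Fin.cons_succ]

lemma multiDelta_cons_cons {m : ℕ} (a : Fin n) (j i : Fin m → Fin n) :
    multiDelta (Fin.cons a j : Fin (m + 1) → Fin n) (Fin.cons a i) =
      multiDelta j i + ∑ c : Fin m, kron a (i c) * ((-1) ^ (c.val + 1) *
        multiDelta j ((Fin.cons a i : Fin (m + 1) → Fin n) ∘ c.succ.succAbove)) := by
  have minor (c : Fin (m + 1)) :
      (Matrix.of fun s t => kron ((Fin.cons a j : Fin (m + 1) → Fin n) s)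
        ((Fin.cons a i : Fin (m + 1) → Fin n) t)).submatrix Fin.succ c.succAbove =
      Matrix.of fun s t => kron (j s) (((Fin.cons a i : Fin (m + 1) → Fin n) ∘ c.succAbove) t) :=
    rfl
  simp only [multiDelta, Matrix.det_succ_row_zero, minor, Fin.sum_univ_succ]
  congr 1
  · simp [kron]
  · refine Finset.sum_congr rfl fun c _ => ?_
    simp only [Matrix.of_apply, Fin.cons_zero, Fin.cons_succ, Fin.val_succ]
    ring

lemma sum_multiDelta_cons_cons {m : ℕ} (j i : Fin m → Fin n) :
    ∑ a, multiDelta (Fin.cons a j : Fin (m + 1) → Fin n) (Fin.cons a i) =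
      ((n : ℝ) - m) * multiDelta j i := by
  have trace_column (c : Fin m) :
      ∑ a, kron a (i c) * ((-1) ^ (c.val + 1) *
        multiDelta j ((Fin.cons a i : Fin (m + 1) → Fin n) ∘ c.succ.succAbove)) =
      -multiDelta j i := by
    rw [sum_kron_mul, cons_comp_succAbove_succ, multiDelta_comp_perm_right, Equiv.Perm.sign_symm,
      Fin.sign_cycleRange, ← mul_assoc]
    push_cast
    rw [← pow_add, Odd.neg_one_pow ⟨c, by ring⟩, neg_one_mul]
  simp only [multiDelta_cons_cons, Finset.sum_add_distrib]
  rw [Finset.sum_comm]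
  simp only [trace_column, Finset.sum_const, Finset.card_univ, Fintype.card_fin, nsmul_eq_mul]
  ring

end MultiDelta

section MulPowDeriv

variable {R : Type*} [CommSemiring R]

/-- The derivative of `u ^ l * v ^ m`, where `u'` is the derivative of `u` and `v'` that of `v`. -/
def mulPowDeriv (u u' v v' : R) (l m : ℕ) : R :=
  l * u' * u ^ (l - 1) * v ^ m + m * v' * u ^ l * v ^ (m - 1)

lemma sum_mul_mulPowDeriv {ι : Type*} (s : Finset ι) (b u' v' : ι → R) (u v : R) (l m : ℕ) :
    ∑ j ∈ s, b j * mulPowDeriv u (u' j) v (v' j) l m =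
      mulPowDeriv u (∑ j ∈ s, b j * u' j) v (∑ j ∈ s, b j * v' j) l m := by
  simp only [mulPowDeriv, Finset.mul_sum, Finset.sum_mul, ← Finset.sum_add_distrib]
  exact Finset.sum_congr rfl fun j _ => by ring

lemma mulPowDeriv_mul_left (u u' v v' c : R) (l m : ℕ) :
    mulPowDeriv u u' (c * v) (c * v') l m = c ^ m * mulPowDeriv u u' v v' l m := by
  cases m with
  | zero => simp [mulPowDeriv]
  | succ m =>
    simp only [mulPowDeriv, Nat.add_sub_cancel]
    ring

lemma snd_mul_pow_eq_mulPowDeriv (x y : DualNumber R) (l m : ℕ) :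
    (x ^ l * y ^ m).snd = mulPowDeriv x.fst x.snd y.fst y.snd l m := by
  simp only [mulPowDeriv, TrivSqZeroExt.snd_mul, TrivSqZeroExt.snd_pow, TrivSqZeroExt.fst_pow,
    op_smul_eq_smul, smul_eq_mul, nsmul_eq_mul, Nat.pred_eq_sub_one]
  ring

/-- Both sides are the derivative of `(u + v) ^ k`. -/
lemma sum_choose_mul_mulPowDeriv (u u' v v' : R) (k : ℕ) :
    ∑ l ∈ Finset.range (k + 1), (k.choose l : R) * mulPowDeriv u u' v v' l (k - l) =
      k * (u' + v') * (u + v) ^ (k - 1) := by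
  let x : DualNumber R := (u, u')
  let y : DualNumber R := (v, v')
  have term_eq (l : ℕ) : (x ^ l * y ^ (k - l) * (k.choose l : DualNumber R)).snd =
      (k.choose l : R) * mulPowDeriv u u' v v' l (k - l) := by
    rw [← nsmul_eq_mul', TrivSqZeroExt.snd_smul, snd_mul_pow_eq_mulPowDeriv, nsmul_eq_mul]
    rfl
  have binomial := congrArg TrivSqZeroExt.snd (add_pow x y k)
  rw [TrivSqZeroExt.snd_sum, TrivSqZeroExt.snd_pow] at binomial
  simp only [term_eq] at binomial
  rw [← binomial, nsmul_eq_mul, smul_eq_mul, mul_comm (_ ^ _), ← mul_assoc]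
  rfl

end MulPowDeriv

section DoubleForms

open MvPolynomial

variable {n : ℕ}

/-- Polynomials in symbols `X (j, i)`, where `X (j, i)` stands for the double form `eʲ ⊗ eᵢ`. -/
abbrev SymbolRing (n : ℕ) : Type := MvPolynomial (Fin n × Fin n) ℝ

open Classical in
/-- The linear functional that replaces a monomial `∏ₐ X (jₐ, iₐ)` by the generalized delta
`δ^{j₁…}_{i₁…}`; the factors are indexed by the multiset of variables of the monomial. -/
noncomputable def symbolContraction (n : ℕ) : SymbolRing n →ₗ[ℝ] ℝ :=
  (basisMonomials (Fin n × Fin n) ℝ).constr ℝ fun s =>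
    multiDelta (fun t : (Finsupp.toMultiset s).ToType => t.1.1) (fun t => t.1.2)

lemma exists_equiv_comp_eq_of_map_univ_eq {ι ι' β : Type*} [Fintype ι] [Fintype ι']
    (f : ι → β) (f' : ι' → β)
    (h : (Finset.univ : Finset ι).val.map f = (Finset.univ : Finset ι').val.map f') :
    ∃ e : ι ≃ ι', f' ∘ e = f := by
  classical
  have fiber_equiv (c : β) : Nonempty ({a // f a = c} ≃ {b // f' b = c}) := by
    have hcount := congrArg (Multiset.count c) h
    rw [Multiset.count_map, Multiset.count_map] at hcount
    refine ⟨Fintype.equivOfCardEq ?_⟩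
    simp only [Fintype.card_subtype, Finset.card, Finset.filter_val]
    simpa only [eq_comm] using hcount
  exact ⟨Equiv.ofFiberEquiv fun c => (fiber_equiv c).some,
    funext fun a => Equiv.ofFiberEquiv_map _ a⟩

lemma prod_X_eq_monomial {R σ ι : Type*} [CommSemiring R] [Fintype ι] (f : ι → σ) :
    (∏ a, X (f a) : MvPolynomial σ R) = monomial (∑ a, Finsupp.single (f a) 1) 1 := by
  rw [monomial_sum_one]
  rfl

lemma toMultiset_sum_single_apply {σ ι : Type*} [Fintype ι] (f : ι → σ) :
    Finsupp.toMultiset (∑ a, Finsupp.single (f a) 1) = Finset.univ.val.map f := by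
  rw [map_sum]
  simp only [Finsupp.toMultiset_single, one_smul, Finset.sum]
  rw [← Multiset.sum_map_singleton (Finset.univ.val.map f), Multiset.map_map]
  rfl

lemma symbolContraction_prod_X {ι : Type*} [Fintype ι] [DecidableEq ι] (j i : ι → Fin n) :
    symbolContraction n (∏ a, X (j a, i a)) = multiDelta j i := by
  classical
  set s : Fin n × Fin n →₀ ℕ := ∑ a, Finsupp.single (j a, i a) 1
  have prod_eq_basis : ∏ a, X (j a, i a) = basisMonomials (Fin n × Fin n) ℝ s := by
    rw [prod_X_eq_monomial fun a => (j a, i a), coe_basisMonomials]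
  rw [prod_eq_basis, symbolContraction, Module.Basis.constr_basis]
  obtain ⟨e, he⟩ := exists_equiv_comp_eq_of_map_univ_eq
    (fun t : (Finsupp.toMultiset s).ToType => t.1) (fun a => (j a, i a))
    ((Multiset.map_univ_coe _).trans (toMultiset_sum_single_apply _))
  rw [← multiDelta_comp_equiv e j i]
  exact congrArg₂ multiDelta (funext fun t => (congrArg Prod.fst (congrFun he t)).symm)
    (funext fun t => (congrArg Prod.snd (congrFun he t)).symm)

lemma monomial_one_eq_prod_X {R σ : Type*} [CommSemiring R] [DecidableEq σ] (s : σ →₀ ℕ) :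
    (monomial s 1 : MvPolynomial σ R) = ∏ t : (Finsupp.toMultiset s).ToType, X t.1 := by
  rw [prod_X_eq_monomial]
  congr
  apply Multiset.toFinsupp.symm.injective
  exact (Multiset.map_univ_coe _).symm.trans (toMultiset_sum_single_apply _).symm

lemma SymbolRing.linearMap_ext {M : Type*} [AddCommMonoid M] [Module ℝ M]
    {f g : SymbolRing n →ₗ[ℝ] M}
    (h : ∀ (ι : Type) [Fintype ι] [DecidableEq ι] (j i : ι → Fin n),
      f (∏ a, X (j a, i a)) = g (∏ a, X (j a, i a))) : f = g :=
  (basisMonomials (Fin n × Fin n) ℝ).ext fun s => by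
    classical
    rw [coe_basisMonomials]
    simp only [monomial_one_eq_prod_X]
    exact h _ (fun t : (Finsupp.toMultiset s).ToType => t.1.1) (fun t => t.1.2)

/-- The largest ideal on which the contraction functional vanishes. -/
noncomputable def contractionIdeal (n : ℕ) : Ideal (SymbolRing n) where
  carrier := {u | ∀ y, symbolContraction n (u * y) = 0}
  add_mem' hu hv y := by rw [add_mul, map_add, hu, hv, add_zero]
  zero_mem' y := by rw [zero_mul, map_zero]
  smul_mem' c u hu y := by rw [smul_eq_mul, mul_comm c, mul_assoc, hu]

/-- Double forms of bidegree `(p, p)`, `p ≥ 0`, modelled as the commutative algebra generated by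
the symbols `eʲ ⊗ eᵢ` modulo all relations that no full contraction can detect. -/
abbrev DoubleForm (n : ℕ) : Type := SymbolRing n ⧸ contractionIdeal n

namespace DoubleForm

/-- The double form `eʲ ⊗ eᵢ` of bidegree `(1, 1)`. -/
noncomputable def basisForm (j i : Fin n) : DoubleForm n :=
  Ideal.Quotient.mk (contractionIdeal n) (X (j, i))

/-- Full contraction of a double form: `∏ₐ e^{jₐ} ⊗ e_{iₐ}` goes to `δ^{j₁…}_{i₁…}`. -/
noncomputable def contraction (n : ℕ) : DoubleForm n →ₗ[ℝ] ℝ :=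
  ((contractionIdeal n).restrictScalars ℝ).liftQ (symbolContraction n)
    (fun u hu => by simpa using (show ∀ y, _ from hu) 1) ∘ₗ
  (Submodule.Quotient.restrictScalarsEquiv ℝ (contractionIdeal n)).symm.toLinearMap

lemma contraction_mk (p : SymbolRing n) :
    contraction n (Ideal.Quotient.mk (contractionIdeal n) p) = symbolContraction n p :=
  rfl

lemma mk_prod_X {ι : Type*} [Fintype ι] (j i : ι → Fin n) :
    Ideal.Quotient.mk (contractionIdeal n) (∏ a, X (j a, i a)) =
      ∏ a, basisForm (j a) (i a) :=
  map_prod _ _ _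

lemma contraction_prod_basisForm {ι : Type*} [Fintype ι] [DecidableEq ι] (j i : ι → Fin n) :
    contraction n (∏ a, basisForm (j a) (i a)) = multiDelta j i := by
  rw [← mk_prod_X, contraction_mk, symbolContraction_prod_X]

lemma prod_basisForm_comp_perm {ι : Type*} [Fintype ι] [DecidableEq ι] (σ : Equiv.Perm ι)
    (j i : ι → Fin n) :
    ∏ a, basisForm (j (σ a)) (i a) =
      ((Equiv.Perm.sign σ : ℤ) : ℝ) • ∏ a, basisForm (j a) (i a) := by
  suffices h : (symbolContraction n ∘ₗ LinearMap.mulLeft ℝ (∏ a, X (j (σ a), i a))) =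
      symbolContraction n ∘ₗ
        LinearMap.mulLeft ℝ (((Equiv.Perm.sign σ : ℤ) : ℝ) • ∏ a, X (j a, i a)) by
    rw [← mk_prod_X, ← mk_prod_X]
    refine Ideal.Quotient.eq.2 fun y => ?_
    rw [sub_mul, map_sub, sub_eq_zero]
    exact LinearMap.congr_fun h y
  refine SymbolRing.linearMap_ext fun ι' _ _ j' i' => ?_
  have contraction_mul (l : ι → Fin n) :
      symbolContraction n ((∏ a, X (l a, i a)) * ∏ b, X (j' b, i' b)) =
        multiDelta (Sum.elim l j') (Sum.elim i i') := by
    rw [← symbolContraction_prod_X, Fintype.prod_sum_type]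
    rfl
  simp only [LinearMap.comp_apply, LinearMap.mulLeft_apply, smul_mul_assoc, map_smul, smul_eq_mul]
  rw [contraction_mul, contraction_mul, ← mul_one (Equiv.Perm.sign σ),
    ← Equiv.Perm.sign_one (α := ι'), ← Equiv.Perm.sign_sumCongr, ← multiDelta_comp_perm_left]
  congr 1
  exact (Sum.elim_comp_map ..).symm

lemma basisForm_mul_basisForm_swap (a b c d : Fin n) :
    basisForm a c * basisForm b d = -(basisForm b c * basisForm a d) := by
  simpa [Fin.prod_univ_two] using prod_basisForm_comp_perm (Equiv.swap 0 1) ![b, a] ![c, d]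

/-- Double forms of bidegree `(1, 1)`; the double forms of bidegree `(m, m)` are the `m`-th power
`linearForms n ^ m` of this submodule. -/
noncomputable def linearForms (n : ℕ) : Submodule ℝ (DoubleForm n) :=
  Submodule.span ℝ (Set.range fun u : Fin n × Fin n => basisForm u.1 u.2)

lemma basisForm_mem_linearForms (j i : Fin n) : basisForm j i ∈ linearForms n :=
  Submodule.subset_span ⟨(j, i), rfl⟩

lemma mul_mem_linearForms_pow {l m : ℕ} {x y : DoubleForm n} (hx : x ∈ linearForms n ^ l)
    (hy : y ∈ linearForms n ^ m) : x * y ∈ linearForms n ^ (l + m) :=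
  SetLike.mul_mem_graded (A := fun m => linearForms n ^ m) hx hy

lemma linearForms_pow_eq_span (m : ℕ) :
    linearForms n ^ m = Submodule.span ℝ
      (Set.range fun x : Fin m → Fin n × Fin n => ∏ a, basisForm (x a).1 (x a).2) := by
  rw [linearForms, Submodule.span_pow]
  congr 1
  ext y
  rw [Set.mem_pow]
  constructor
  · rintro ⟨f, rfl⟩
    choose x hx using fun a => (f a).2
    exact ⟨x, by simp only [List.prod_ofFn, ← hx]⟩
  · rintro ⟨x, rfl⟩
    exact ⟨fun a => ⟨_, x a, rfl⟩, List.prod_ofFn ..⟩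

/-- The metric `∑ₐ eᵃ ⊗ eₐ`, viewed as a double form. -/
noncomputable def metricForm (n : ℕ) : DoubleForm n := ∑ a, basisForm a a

lemma metricForm_mem_linearForms : metricForm n ∈ linearForms n :=
  Submodule.sum_mem _ fun a _ => basisForm_mem_linearForms a a

lemma contraction_metricForm_mul {m : ℕ} {y : DoubleForm n} (hy : y ∈ linearForms n ^ m) :
    contraction n (metricForm n * y) = ((n : ℝ) - m) * contraction n y := by
  rw [linearForms_pow_eq_span] at hy
  induction hy using Submodule.span_induction with
  | mem y hy =>
    obtain ⟨x, rfl⟩ := hy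
    have contraction_cons (a : Fin n) :
        contraction n (basisForm a a * ∏ b, basisForm (x b).1 (x b).2) =
          multiDelta (Fin.cons a fun b => (x b).1 : Fin (m + 1) → Fin n)
            (Fin.cons a fun b => (x b).2) := by
      simp [← contraction_prod_basisForm, Fin.prod_univ_succ]
    simp only [metricForm, Finset.sum_mul, map_sum, contraction_cons, sum_multiDelta_cons_cons,
      contraction_prod_basisForm]
  | zero => simp
  | add y z _ _ hy hz => rw [mul_add, map_add, map_add, hy, hz, mul_add]
  | smul c y _ hy => rw [mul_smul_comm, map_smul, map_smul, hy, smul_eq_mul, smul_eq_mul]; ring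

lemma contraction_metricForm_pow_mul {m s : ℕ} (hn : m + s = n) {y : DoubleForm n}
    (hy : y ∈ linearForms n ^ m) :
    contraction n (metricForm n ^ s * y) = (s.factorial : ℝ) * contraction n y := by
  induction s generalizing m y with
  | zero => simp
  | succ s ih =>
    have hgy : metricForm n * y ∈ linearForms n ^ (m + 1) := by
      rw [mul_comm, Submodule.pow_succ]
      exact Submodule.mul_mem_mul hy metricForm_mem_linearForms
    have hs : (n : ℝ) - m = (s + 1 : ℕ) := by rw [sub_eq_iff_eq_add', ← Nat.cast_add, hn]
    rw [pow_succ, mul_assoc, ih (by omega) hgy, contraction_metricForm_mul hy, hs,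
      Nat.factorial_succ, Nat.cast_mul, ← mul_assoc, mul_comm (s.factorial : ℝ)]

/-- The double form of bidegree `(1, 1)` with components `B`. -/
noncomputable def bilinForm (B : Fin n → Fin n → ℝ) : DoubleForm n :=
  ∑ u : Fin n × Fin n, B u.1 u.2 • basisForm u.1 u.2

/-- The double form of bidegree `(2, 2)` with components `A a b c d`, the indices `a b` being those
of the first factor and `c d` those of the second. -/
noncomputable def curvForm (A : Fin n → Fin n → Fin n → Fin n → ℝ) : DoubleForm n :=
  ∑ u : Fin n × Fin n, ∑ v : Fin n × Fin n,
    A u.1 v.1 u.2 v.2 • (basisForm u.1 u.2 * basisForm v.1 v.2)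

lemma bilinForm_mem_linearForms (B : Fin n → Fin n → ℝ) : bilinForm B ∈ linearForms n :=
  Submodule.sum_mem _ fun _ _ => Submodule.smul_mem _ _ (basisForm_mem_linearForms _ _)

lemma curvForm_mem_linearForms_sq (A : Fin n → Fin n → Fin n → Fin n → ℝ) :
    curvForm A ∈ linearForms n ^ 2 := by
  rw [sq]
  exact Submodule.sum_mem _ fun _ _ => Submodule.sum_mem _ fun _ _ => Submodule.smul_mem _ _ <|
    Submodule.mul_mem_mul (basisForm_mem_linearForms _ _) (basisForm_mem_linearForms _ _)

lemma metricForm_eq_bilinForm_kron : metricForm n = bilinForm kron := by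
  simp [metricForm, bilinForm, kron, Fintype.sum_prod_type]

lemma curvForm_mul_kron (B : Fin n → Fin n → ℝ) :
    curvForm (fun a b c d => B a c * kron b d) = metricForm n * bilinForm B := by
  simp only [metricForm_eq_bilinForm_kron, curvForm, bilinForm, mul_comm (∑ _, kron _ _ • _),
    Finset.sum_mul_sum, smul_mul_smul_comm]

lemma curvForm_swap_left (A : Fin n → Fin n → Fin n → Fin n → ℝ) :
    curvForm (fun a b c d => A b a c d) = -curvForm A := by
  simp only [curvForm, ← Fintype.sum_prod_type', ← Finset.sum_neg_distrib]
  refine Fintype.sum_equiv (Function.Involutive.toPerm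
    (fun q : (Fin n × Fin n) × (Fin n × Fin n) => ((q.2.1, q.1.2), (q.1.1, q.2.2)))
    fun _ => rfl) _ _ fun q => ?_
  rw [basisForm_mul_basisForm_swap, smul_neg]
  rfl

lemma curvForm_swap_both (A : Fin n → Fin n → Fin n → Fin n → ℝ) :
    curvForm (fun a b c d => A b a d c) = curvForm A := by
  rw [curvForm, Finset.sum_comm]
  simp only [curvForm, mul_comm]

lemma curvForm_swap_right (A : Fin n → Fin n → Fin n → Fin n → ℝ) :
    curvForm (fun a b c d => A a b d c) = -curvForm A := by
  rw [curvForm_swap_left fun a b c d => A b a d c, curvForm_swap_both]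

lemma curvForm_add (A A' : Fin n → Fin n → Fin n → Fin n → ℝ) :
    curvForm (fun a b c d => A a b c d + A' a b c d) = curvForm A + curvForm A' := by
  simp only [curvForm, add_smul, Finset.sum_add_distrib]

lemma curvForm_sub (A A' : Fin n → Fin n → Fin n → Fin n → ℝ) :
    curvForm (fun a b c d => A a b c d - A' a b c d) = curvForm A - curvForm A' := by
  simp only [curvForm, sub_smul, Finset.sum_sub_distrib]

lemma curvForm_alt2 (A : Fin n → Fin n → Fin n → Fin n → ℝ) :
    curvForm (fun a b => alt2 (A a b)) = curvForm A := by
  have curvForm_half (A' : Fin n → Fin n → Fin n → Fin n → ℝ) :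
      curvForm (fun a b c d => 1 / 2 * A' a b c d) = (1 / 2 : ℝ) • curvForm A' := by
    simp only [curvForm, mul_smul, Finset.smul_sum]
  change curvForm (fun a b c d => 1 / 2 * (A a b c d - A a b d c)) = _
  rw [curvForm_half fun a b c d => A a b c d - A a b d c, curvForm_sub, curvForm_swap_right]
  module

/-- The curvature tensor `W + P ∧ g` with Weyl part `W` and Schouten tensor `P`, where `∧` is the
Kulkarni–Nomizu product. -/
noncomputable def riemannOfWeylSchouten (W : Fin n → Fin n → Fin n → Fin n → ℝ)
    (P : Fin n → Fin n → ℝ) (a b c d : Fin n) : ℝ :=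
  W a b c d + P a c * kron b d - P a d * kron b c + P b d * kron a c - P b c * kron a d

lemma curvForm_riemannOfWeylSchouten (W : Fin n → Fin n → Fin n → Fin n → ℝ)
    (P : Fin n → Fin n → ℝ) :
    curvForm (riemannOfWeylSchouten W P) = curvForm W + 4 * metricForm n * bilinForm P := by
  change curvForm (fun a b c d => W a b c d + P a c * kron b d - P a d * kron b c +
    P b d * kron a c - P b c * kron a d) = _
  rw [curvForm_sub, curvForm_add, curvForm_sub, curvForm_add,
    curvForm_swap_right fun a b c d => P a c * kron b d,
    curvForm_swap_both fun a b c d => P a c * kron b d,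
    curvForm_swap_left fun a b c d => P a c * kron b d, curvForm_mul_kron]
  ring

section IndexSums

lemma sum_prod_pairs_mul_prod_singles {R α κ μ ι : Type*} [CommSemiring R] [Fintype α] [Fintype κ]
    [Fintype μ] [Fintype ι] [DecidableEq ι]
    (e : (κ × Bool) ⊕ μ ≃ ι) (f : κ → α → α → R) (g : μ → α → R) :
    ∑ x : ι → α, (∏ a, f a (x (e (.inl (a, false)))) (x (e (.inl (a, true))))) *
        ∏ b, g b (x (e (.inr b))) =
      (∏ a, ∑ u, ∑ v, f a u v) * ∏ b, ∑ u, g b u := by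
  classical
  let split : (ι → α) ≃ (κ → α × α) × (μ → α) :=
    (Equiv.arrowCongr e.symm (Equiv.refl α)).trans <|
      (Equiv.sumArrowEquivProdArrow (κ × Bool) μ α).trans <|
        Equiv.prodCongr ((Equiv.curry κ Bool α).trans
          (Equiv.arrowCongr (Equiv.refl κ) (Equiv.boolArrowEquivProd α))) (Equiv.refl _)
  simp only [← Fintype.sum_prod_type', Fintype.prod_sum, Fintype.sum_mul_sum]
  exact Fintype.sum_equiv split _ _ fun x => rfl

variable {κ μ ι : Type*} (e : (κ × Bool) ⊕ μ ≃ ι)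

/-- The component of `A` on the `a`-th pair of slots. The equivalence `e` declares the slots `ι` of
`J` and `I` to consist of `κ`-many pairs followed by `μ`-many single slots. -/
abbrev pairEntry (A : Fin n → Fin n → Fin n → Fin n → ℝ) (J I : ι → Fin n) (a : κ) : ℝ :=
  A (J (e (.inl (a, false)))) (J (e (.inl (a, true))))
    (I (e (.inl (a, false)))) (I (e (.inl (a, true))))

/-- The component of `B` on the `b`-th single slot; see `pairEntry`. -/
abbrev singleEntry (B : Fin n → Fin n → ℝ) (J I : ι → Fin n) (b : μ) : ℝ :=
  B (J (e (.inr b))) (I (e (.inr b)))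

variable [Fintype κ] [Fintype μ] [Fintype ι] [DecidableEq ι]

lemma sum_smul_prod_basisForm (A : κ → Fin n → Fin n → Fin n → Fin n → ℝ)
    (B : μ → Fin n → Fin n → ℝ) :
    ∑ J : ι → Fin n, ∑ I : ι → Fin n,
      ((∏ a, pairEntry e (A a) J I a) * ∏ b, singleEntry e (B b) J I b) •
        ∏ s, basisForm (J s) (I s) =
      (∏ a, curvForm (A a)) * ∏ b, bilinForm (B b) := by
  simp only [curvForm, bilinForm]
  rw [← sum_prod_pairs_mul_prod_singles e, ← Fintype.sum_prod_type']
  refine Fintype.sum_equiv (Equiv.arrowProdEquivProdArrow ι _ _).symm _ _ fun q => ?_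
  rw [← e.prod_comp, Fintype.prod_sum_type, Fintype.prod_prod_type]
  simp only [Fintype.prod_bool, Finset.prod_smul, smul_mul_smul_comm]
  congr 2
  exact Finset.prod_congr rfl fun a _ => mul_comm _ _

lemma prod_apply_update {R α : Type*} [CommMonoid R] [DecidableEq κ] (F : κ → α → R) (w : κ)
    (x x' : α) :
    ∏ a, F a (Function.update (fun _ => x) w x' a) =
      F w x' * ∏ a ∈ Finset.univ.erase w, F a x := by
  rw [← Finset.mul_prod_erase _ _ (Finset.mem_univ w), Function.update_self]
  congr 1
  refine Finset.prod_congr rfl fun a ha => ?_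
  rw [Function.update_of_ne (Finset.ne_of_mem_erase ha)]

lemma sum_leibniz_smul_prod_basisForm [DecidableEq κ] [DecidableEq μ]
    (A A' : Fin n → Fin n → Fin n → Fin n → ℝ) (B B' : Fin n → Fin n → ℝ) :
    ∑ J : ι → Fin n, ∑ I : ι → Fin n,
      ((∑ w, pairEntry e A' J I w * (∏ a ∈ Finset.univ.erase w, pairEntry e A J I a) *
          ∏ b, singleEntry e B J I b) +
        ∑ p, singleEntry e B' J I p * (∏ a, pairEntry e A J I a) *
          ∏ b ∈ Finset.univ.erase p, singleEntry e B J I b) • ∏ s, basisForm (J s) (I s) =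
      mulPowDeriv (curvForm A) (curvForm A') (bilinForm B) (bilinForm B')
        (Fintype.card κ) (Fintype.card μ) := by
  have hit_pair (w : κ) :
      ∑ J : ι → Fin n, ∑ I : ι → Fin n,
        (pairEntry e A' J I w * (∏ a ∈ Finset.univ.erase w, pairEntry e A J I a) *
          ∏ b, singleEntry e B J I b) • ∏ s, basisForm (J s) (I s) =
      curvForm A' * curvForm A ^ (Fintype.card κ - 1) * bilinForm B ^ Fintype.card μ := by
    have h := sum_smul_prod_basisForm e (Function.update (fun _ => A) w A') fun _ => B
    rw [prod_apply_update fun _ => curvForm] at h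
    simp only [fun J I => prod_apply_update (fun a A => pairEntry e A J I a) w] at h
    simpa using h
  have hit_single (p : μ) :
      ∑ J : ι → Fin n, ∑ I : ι → Fin n,
        (singleEntry e B' J I p * (∏ a, pairEntry e A J I a) *
          ∏ b ∈ Finset.univ.erase p, singleEntry e B J I b) • ∏ s, basisForm (J s) (I s) =
      bilinForm B' * curvForm A ^ Fintype.card κ * bilinForm B ^ (Fintype.card μ - 1) := by
    have h := sum_smul_prod_basisForm e (fun _ => A) (Function.update (fun _ => B) p B')
    rw [prod_apply_update fun _ => bilinForm] at h
    simp only [fun J I => prod_apply_update (fun b B => singleEntry e B J I b) p] at h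
    simpa [mul_assoc, mul_left_comm (bilinForm B'), mul_left_comm (B' _ _)] using h
  simp only [add_smul, Finset.sum_smul, Finset.sum_add_distrib]
  rw [Finset.sum_comm_cycle, Finset.sum_comm_cycle (u := (Finset.univ : Finset μ))]
  simp only [hit_pair, hit_single, Finset.sum_const, Finset.card_univ, nsmul_eq_mul, mulPowDeriv]
  ring

end IndexSums

/-- The slots `0, …, 2 l + r - 1` as `l` consecutive pairs followed by `r` single slots. -/
noncomputable def pairsThenSingles {l r N : ℕ} (hN : 2 * l + r = N) :
    (Fin l × Bool) ⊕ Fin r ≃ Fin N :=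
  Equiv.ofBijective
    (Sum.elim (fun q => ⟨2 * q.1.val + q.2.toNat, by have := q.1.isLt; have := q.2.toNat_le; omega⟩)
      fun b => ⟨2 * l + b.val, by omega⟩)
    ((Fintype.bijective_iff_injective_and_card _).2 ⟨by
      rintro (⟨a, _ | _⟩ | b) (⟨a', _ | _⟩ | b') h <;> simp [Fin.ext_iff] at h ⊢ <;> omega,
      by simp; omega⟩)

/-- The slots `0, …, 2 l` as the single slot `0` followed by `l` consecutive pairs. -/
noncomputable def pairsAfterZero (l : ℕ) : (Fin l × Bool) ⊕ Unit ≃ Fin (2 * l + 1) :=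
  Equiv.ofBijective (Sum.elim (fun q => bif q.2 then e2 q.1 else e1 q.1) fun _ => 0)
    ((Fintype.bijective_iff_injective_and_card _).2 ⟨by
      rintro (⟨a, _ | _⟩ | _) (⟨a', _ | _⟩ | _) h <;>
        simp [e1, e2, Fin.ext_iff] at h ⊢ <;> omega, by simp; omega⟩)

lemma contraction_basisForm_mul_prod {m : ℕ} (j i : Fin n) (J I : Fin m → Fin n) :
    contraction n (basisForm j i * ∏ s, basisForm (J s) (I s)) =
      gdelta (Fin.cons j J) (Fin.cons i I) := by
  change _ = multiDelta _ _
  simp [← contraction_prod_basisForm, Fin.prod_univ_succ]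

lemma DPfA_eq_contraction {k : ℕ} (A : Fin n → Fin n → Fin n → Fin n → ℝ)
    (DA : Fin n → Fin n → Fin n → Fin n → Fin n → ℝ) (i : Fin n) :
    DPfA (k := k) A DA i =
      1 / (k.factorial : ℝ) * contraction n (k * curvForm (DA i) * curvForm A ^ (k - 1)) := by
  have h := congrArg (contraction n) <| sum_leibniz_smul_prod_basisForm
    (pairsThenSingles (l := k) (r := 0) rfl) A (DA i) 0 0
  simp only [map_sum, map_smul, contraction_prod_basisForm, mulPowDeriv, Finset.univ_eq_empty,
    Finset.prod_empty, Finset.sum_empty, Fintype.card_fin, Nat.cast_zero, zero_mul, add_zero,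
    pow_zero, mul_one] at h
  rw [← h, DPfA]
  refine congrArg _ ?_
  exact Finset.sum_congr rfl fun J _ => Finset.sum_congr rfl fun I _ => mul_comm _ _

lemma xiTerm1_eq_contraction {K : ℕ} (W : Fin n → Fin n → Fin n → Fin n → ℝ)
    (C : Fin n → Fin n → Fin n → ℝ) (i : Fin n) :
    xiTerm1 (K := K) W C i = 1 / ((K + 1).factorial : ℝ) *
      contraction n ((∑ j, basisForm j i * bilinForm (C j)) * curvForm W ^ K) := by
  have h (j : Fin n) := congrArg (fun y => contraction n (basisForm j i * y)) <|
    sum_smul_prod_basisForm (pairsAfterZero K) (fun _ => W) (fun _ => C j)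
  simp only [Finset.mul_sum, mul_smul_comm, map_sum, map_smul, contraction_basisForm_mul_prod] at h
  rw [xiTerm1, Finset.sum_mul, map_sum]
  refine congrArg _ (Finset.sum_congr rfl fun j _ => ?_)
  simp only [Finset.prod_const, Finset.card_univ, Fintype.card_fin, Finset.univ_unique,
    Finset.prod_singleton, Finset.card_singleton, pow_one] at h
  rw [mul_assoc, mul_comm (bilinForm _), ← h]
  refine Finset.sum_congr rfl fun J _ => Finset.sum_congr rfl fun I _ => ?_
  rw [smul_eq_mul, mul_comm, mul_comm (gdelta _ _), ← mul_assoc]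
  rfl

lemma DOmegaT_eq_sum_contraction {k : ℕ} (W : Fin n → Fin n → Fin n → Fin n → ℝ)
    (P : Fin n → Fin n → ℝ) (DW : Fin n → Fin n → Fin n → Fin n → Fin n → ℝ)
    (DP : Fin n → Fin n → Fin n → ℝ) (e i j : Fin n) :
    DOmegaT (k := k) W P DW DP e i j =
      ∑ l ∈ Finset.range k, (4 : ℝ) ^ (k - l) * (1 / ((l.factorial : ℝ) * ((k : ℝ) - l))) *
        contraction n (basisForm j i *
          mulPowDeriv (curvForm W) (curvForm (DW e)) (bilinForm P) (bilinForm (DP e))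
            l (k - l)) := by
  rw [Finset.sum_range, DOmegaT]
  refine Finset.sum_congr rfl fun l _ => congrArg _ ?_
  have h := congrArg (fun y => contraction n (basisForm j i * y)) <|
    sum_leibniz_smul_prod_basisForm (pairsThenSingles (l := l) (r := k - l) (N := k + l) (by omega))
      W (DW e) P (DP e)
  simp only [Finset.mul_sum, mul_smul_comm, map_sum, map_smul, contraction_basisForm_mul_prod,
    Fintype.card_fin] at h
  rw [← h]
  exact Finset.sum_congr rfl fun J _ => Finset.sum_congr rfl fun I _ => mul_comm _ _

lemma bilinForm_sub (B B' : Fin n → Fin n → ℝ) :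
    bilinForm (fun a c => B a c - B' a c) = bilinForm B - bilinForm B' := by
  simp only [bilinForm, sub_smul, Finset.sum_sub_distrib]

/-- The form `∑ⱼ (eʲ ⊗ eᵢ) · Tⱼ`: the factor `eʲ` antisymmetrizes the derivative index of `T = ∇B`
together with the first index of `B`, as in the exterior derivative of `B`. -/
noncomputable def gradBilinForm (T : Fin n → Fin n → Fin n → ℝ) (i : Fin n) : DoubleForm n :=
  ∑ j, basisForm j i * bilinForm (T j)

/-- The form `∑ⱼ (eʲ ⊗ eᵢ) · Tⱼ` for `T = ∇A`; see `gradBilinForm`. -/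
noncomputable def gradCurvForm (T : Fin n → Fin n → Fin n → Fin n → Fin n → ℝ) (i : Fin n) :
    DoubleForm n :=
  ∑ j, basisForm j i * curvForm (T j)

lemma gradBilinForm_swap (T : Fin n → Fin n → Fin n → ℝ) (i : Fin n) :
    gradBilinForm (fun a b => T b a) i = -gradBilinForm T i := by
  simp only [gradBilinForm, bilinForm, Fintype.sum_prod_type, Finset.mul_sum, mul_smul_comm,
    ← Finset.sum_neg_distrib, ← smul_neg]
  rw [Finset.sum_comm]
  simp only [← basisForm_mul_basisForm_swap]

lemma gradBilinForm_cotton {T C : Fin n → Fin n → Fin n → ℝ}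
    (hC : ∀ i j k, C i j k = T i j k - T j i k) (i : Fin n) :
    gradBilinForm C i = 2 * gradBilinForm T i := by
  have split : gradBilinForm C i = gradBilinForm T i - gradBilinForm (fun a b => T b a) i := by
    simp only [gradBilinForm, ← Finset.sum_sub_distrib, ← mul_sub, ← bilinForm_sub, ← hC]
  rw [split, gradBilinForm_swap]
  ring

lemma sum_alt3_smul {M : Type*} [AddCommGroup M] [Module ℝ M]
    (T : Fin n → Fin n → Fin n → ℝ) (D : (Fin 3 → Fin n) → M)
    (hD : ∀ (σ : Equiv.Perm (Fin 3)) x, D (x ∘ σ) = ((Equiv.Perm.sign σ : ℤ) : ℝ) • D x) :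
    ∑ x, alt3 T (x 0) (x 1) (x 2) • D x = ∑ x, T (x 0) (x 1) (x 2) • D x := by
  have reindex (σ : Equiv.Perm (Fin 3)) :
      ∑ x : Fin 3 → Fin n,
        (((Equiv.Perm.sign σ : ℤ) : ℝ) * T (x (σ 0)) (x (σ 1)) (x (σ 2))) • D x =
      ∑ x, T (x 0) (x 1) (x 2) • D x := by
    refine Fintype.sum_equiv (Equiv.arrowCongr σ.symm (Equiv.refl _)) _ _ fun x => ?_
    have hx : Equiv.arrowCongr σ.symm (Equiv.refl (Fin n)) x = x ∘ σ := rfl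
    rw [hx, hD, mul_comm, mul_smul]
    rfl
  have tuple (x : Fin 3 → Fin n) : ![x 0, x 1, x 2] = x := FinVec.etaExpand_eq x
  simp only [alt3, tuple, mul_smul, Finset.sum_smul, ← Finset.smul_sum]
  rw [Finset.sum_comm]
  simp only [← mul_smul, reindex, Finset.sum_const, Finset.card_univ, Fintype.card_perm,
    Fintype.card_fin, Nat.factorial]
  module

lemma gradCurvForm_eq_sum_tuples (T : Fin n → Fin n → Fin n → Fin n → Fin n → ℝ) (i : Fin n) :
    gradCurvForm T i = ∑ l, ∑ m, ∑ x : Fin 3 → Fin n, T (x 0) (x 1) (x 2) l m •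
      ∏ a, basisForm (x a) (![i, l, m] a) := by
  let regroup : Fin n × (Fin n × Fin n) × (Fin n × Fin n) ≃ Fin n × Fin n × (Fin 3 → Fin n) :=
    { toFun := fun q => (q.2.1.2, q.2.2.2, ![q.1, q.2.1.1, q.2.2.1])
      invFun := fun r => (r.2.2 0, (r.2.2 1, r.1), (r.2.2 2, r.2.1))
      left_inv := fun _ => rfl
      right_inv := fun r =>
        congrArg (fun x => (r.1, r.2.1, x)) (FinVec.etaExpand_eq r.2.2) }
  simp only [gradCurvForm, curvForm, Finset.mul_sum, mul_smul_comm, ← Fintype.sum_prod_type']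
  refine Fintype.sum_equiv regroup _ _ fun q => ?_
  rw [Fin.prod_univ_three, mul_assoc]
  rfl

lemma gradCurvForm_eq_smul_of_alt3 {T T' : Fin n → Fin n → Fin n → Fin n → Fin n → ℝ} {c : ℝ}
    (h : ∀ i j k l m, alt3 (fun a b c => T a b c l m) i j k =
      c * alt3 (fun a b c => T' a b c l m) i j k) (i : Fin n) :
    gradCurvForm T i = c • gradCurvForm T' i := by
  simp only [gradCurvForm_eq_sum_tuples, Finset.smul_sum (r := c)]
  refine Finset.sum_congr rfl fun l _ => Finset.sum_congr rfl fun m _ => ?_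
  have alternating (σ : Equiv.Perm (Fin 3)) (x : Fin 3 → Fin n) :=
    prod_basisForm_comp_perm σ x ![i, l, m]
  rw [← Finset.smul_sum, ← sum_alt3_smul (fun a b c => T a b c l m) _ alternating,
    ← sum_alt3_smul (fun a b c => T' a b c l m) _ alternating, Finset.smul_sum]
  simp only [h, mul_smul]

lemma gradCurvForm_weyl {T : Fin n → Fin n → Fin n → Fin n → Fin n → ℝ}
    {C : Fin n → Fin n → Fin n → ℝ}
    (hT : ∀ i j k l m, alt3 (fun a b c => T a b c l m) i j k =
      -2 * alt3 (fun a b c => alt2 (fun x y => C a b x * kron c y) l m) i j k) (i : Fin n) :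
    gradCurvForm T i = -2 * metricForm n * gradBilinForm C i := by
  have curvForm_eq (j : Fin n) :
      curvForm (fun b c => alt2 fun x y => C j b x * kron c y) =
        metricForm n * bilinForm (C j) :=
    (curvForm_alt2 fun b c x y => C j b x * kron c y).trans (curvForm_mul_kron _)
  rw [gradCurvForm_eq_smul_of_alt3
    (T' := fun a b c => alt2 fun x y => C a b x * kron c y) hT, gradCurvForm, gradBilinForm,
    Finset.smul_sum, Finset.mul_sum]
  refine Finset.sum_congr rfl fun j _ => ?_
  rw [curvForm_eq, neg_smul, two_smul]
  ring

lemma mul_pow_mul_pow_mem_linearForms_pow {d l m N : ℕ} {t u v : DoubleForm n}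
    (ht : t ∈ linearForms n ^ d) (hu : u ∈ linearForms n ^ 2) (hv : v ∈ linearForms n)
    (hN : d + 2 * l + m = N) : t * u ^ l * v ^ m ∈ linearForms n ^ N := by
  have hul : u ^ l ∈ linearForms n ^ (2 * l) := by
    simpa only [smul_eq_mul, mul_comm] using
      SetLike.pow_mem_graded (A := fun m => linearForms n ^ m) l hu
  rw [← hN]
  exact mul_mem_linearForms_pow (mul_mem_linearForms_pow ht hul) (Submodule.pow_mem_pow _ hv m)

lemma mulPowDeriv_mem_linearForms_pow {u u' v v' : DoubleForm n} (hu : u ∈ linearForms n ^ 2)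
    (hu' : u' ∈ linearForms n ^ 2) (hv : v ∈ linearForms n) (hv' : v' ∈ linearForms n) (l m : ℕ) :
    mulPowDeriv u u' v v' l m ∈ linearForms n ^ (2 * l + m) := by
  have natCast_mul_mem {x : DoubleForm n} (c : ℕ) (hx : x ∈ linearForms n ^ (2 * l + m)) :
      (c : DoubleForm n) * x ∈ linearForms n ^ (2 * l + m) := by
    rw [← nsmul_eq_mul]
    exact nsmul_mem hx c
  have hit_u : (l : DoubleForm n) * (u' * u ^ (l - 1) * v ^ m) ∈ linearForms n ^ (2 * l + m) := by
    rcases l.eq_zero_or_pos with rfl | hl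
    · simp
    · exact natCast_mul_mem l (mul_pow_mul_pow_mem_linearForms_pow hu' hu hv (by omega))
  have hit_v : (m : DoubleForm n) * (v' * u ^ l * v ^ (m - 1)) ∈ linearForms n ^ (2 * l + m) := by
    rcases m.eq_zero_or_pos with rfl | hm
    · simp
    · rw [← Submodule.pow_one (linearForms n)] at hv'
      exact natCast_mul_mem m (mul_pow_mul_pow_mem_linearForms_pow hv' hu hv (by omega))
  simpa only [mulPowDeriv, mul_assoc] using add_mem hit_u hit_v

lemma gradBilinForm_mem_linearForms_sq (T : Fin n → Fin n → Fin n → ℝ) (i : Fin n) :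
    gradBilinForm T i ∈ linearForms n ^ 2 := by
  rw [sq]
  exact Submodule.sum_mem _ fun j _ =>
    Submodule.mul_mem_mul (basisForm_mem_linearForms _ _) (bilinForm_mem_linearForms _)

section Divergence

lemma contraction_mulPowDeriv_of_bianchi {k l : ℕ} (hn : n = 2 * k) (hl : l < k)
    {t u v : DoubleForm n} (ht : t ∈ linearForms n ^ 2) (hu : u ∈ linearForms n ^ 2)
    (hv : v ∈ linearForms n) :
    contraction n (mulPowDeriv u (-4 * metricForm n * t) v t l (k - l)) =
      ((k : ℝ) - l) * (contraction n (t * u ^ l * v ^ (k - (l + 1))) -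
        4 * l * contraction n (t * u ^ (l - 1) * v ^ (k - l))) := by
  have trace : (l : ℝ) * contraction n (metricForm n * (t * u ^ (l - 1) * v ^ (k - l))) =
      l * (((k : ℝ) - l) * contraction n (t * u ^ (l - 1) * v ^ (k - l))) := by
    rcases l.eq_zero_or_pos with rfl | hl_pos
    · simp
    · rw [contraction_metricForm_mul (mul_pow_mul_pow_mem_linearForms_pow ht hu hv rfl)]
      have codegree : (n : ℝ) - (2 + 2 * (l - 1) + (k - l) : ℕ) = (k : ℝ) - l := by
        rw [show 2 + 2 * (l - 1) + (k - l) = k + l by omega, hn]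
        push_cast
        ring
      rw [codegree]
  have expand : mulPowDeriv u (-4 * metricForm n * t) v t l (k - l) =
      (k - l) • (t * u ^ l * v ^ (k - (l + 1))) -
        (4 * l) • (metricForm n * (t * u ^ (l - 1) * v ^ (k - l))) := by
    simp only [mulPowDeriv, nsmul_eq_mul, ← Nat.sub_sub]
    push_cast
    ring
  rw [expand, map_sub, map_nsmul, map_nsmul, nsmul_eq_mul, nsmul_eq_mul, Nat.cast_sub hl.le]
  push_cast
  linear_combination (-4) * trace

lemma contraction_choose_mul_metricForm_pow_mul {k l : ℕ} (hn : n = 2 * k) (hl : l ≤ k)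
    {y : DoubleForm n} (hy : y ∈ linearForms n ^ (2 * l + (k - l))) :
    1 / k.factorial * contraction n ((k.choose l : DoubleForm n) *
        ((4 * metricForm n) ^ (k - l) * y)) =
      (4 : ℝ) ^ (k - l) / l.factorial * contraction n y := by
  have pull_scalar : (k.choose l : DoubleForm n) * ((4 * metricForm n) ^ (k - l) * y) =
      (k.choose l * 4 ^ (k - l)) • (metricForm n ^ (k - l) * y) := by
    rw [nsmul_eq_mul]
    push_cast
    ring
  have hchoose : (k.choose l : ℝ) ≠ 0 := Nat.cast_ne_zero.2 (Nat.choose_pos hl).ne'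
  rw [pull_scalar, map_nsmul, contraction_metricForm_pow_mul (by omega) hy, nsmul_eq_mul,
    ← Nat.choose_mul_factorial_mul_factorial hl]
  push_cast
  field_simp

variable (W : Fin n → Fin n → Fin n → Fin n → ℝ) (P : Fin n → Fin n → ℝ)
  (DW : Fin n → Fin n → Fin n → Fin n → Fin n → ℝ) (DP : Fin n → Fin n → Fin n → ℝ)

lemma sum_DOmegaT_divergence_eq (k : ℕ) (i : Fin n) :
    ∑ j, DOmegaT (k := k) W P DW DP j i j =
      ∑ l ∈ Finset.range k, (4 : ℝ) ^ (k - l) * (1 / ((l.factorial : ℝ) * ((k : ℝ) - l))) *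
        contraction n (mulPowDeriv (curvForm W) (gradCurvForm DW i) (bilinForm P)
          (gradBilinForm DP i) l (k - l)) := by
  simp only [DOmegaT_eq_sum_contraction]
  rw [Finset.sum_comm]
  simp only [← Finset.mul_sum, ← map_sum, sum_mul_mulPowDeriv]
  rfl

/-- The sum over `l` telescopes: by the Bianchi identity, the terms in which `∇` falls on `W` cancel
those of the previous summand in which it falls on `P`. -/
lemma sum_DOmegaT_divergence {k : ℕ} (hn : n = 2 * k) (i : Fin n)
    (hDW : gradCurvForm DW i = -4 * metricForm n * gradBilinForm DP i) :
    ∑ j, DOmegaT (k := k) W P DW DP j i j =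
      4 * k * (1 / k.factorial * contraction n (gradBilinForm DP i * curvForm W ^ (k - 1))) := by
  let f : ℕ → ℝ := fun l => 4 ^ (k - l + 1) * (l / l.factorial) *
    contraction n (gradBilinForm DP i * curvForm W ^ (l - 1) * bilinForm P ^ (k - l))
  have telescoping_term (l : ℕ) (hl : l ∈ Finset.range k) :
      (4 : ℝ) ^ (k - l) * (1 / ((l.factorial : ℝ) * ((k : ℝ) - l))) *
        contraction n (mulPowDeriv (curvForm W) (gradCurvForm DW i) (bilinForm P)
          (gradBilinForm DP i) l (k - l)) = f (l + 1) - f l := by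
    have hlk : l < k := Finset.mem_range.1 hl
    have hkl : (k : ℝ) - l ≠ 0 := sub_ne_zero.2 (by exact_mod_cast hlk.ne')
    rw [hDW, contraction_mulPowDeriv_of_bianchi hn hlk (gradBilinForm_mem_linearForms_sq DP i)
      (curvForm_mem_linearForms_sq W) (bilinForm_mem_linearForms P)]
    simp only [f, show k - (l + 1) + 1 = k - l by omega, Nat.factorial_succ, Nat.add_sub_cancel]
    have hfac : (l.factorial : ℝ) ≠ 0 := Nat.cast_ne_zero.2 l.factorial_ne_zero
    push_cast
    field_simp
    ring
  rw [sum_DOmegaT_divergence_eq, Finset.sum_congr rfl telescoping_term, Finset.sum_range_sub]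
  simp only [f, Nat.cast_zero, zero_div, mul_zero, zero_mul, sub_zero, Nat.sub_self, zero_add,
    pow_one, pow_zero, mul_one]
  ring

lemma sum_DOmegaT_divergence_eq_xiTerm1 {K : ℕ} (hn : n = 2 * (K + 1))
    {C : Fin n → Fin n → Fin n → ℝ} (hC : ∀ i j k, C i j k = DP i j k - DP j i k)
    (hBianchi : ∀ i j k l m, alt3 (fun a b c => DW a b c l m) i j k =
      -2 * alt3 (fun a b c => alt2 (fun x y => C a b x * kron c y) l m) i j k) (i : Fin n) :
    ∑ j, DOmegaT (k := K + 1) W P DW DP j i j =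
      2 * ((K : ℝ) + 1) * xiTerm1 (K := K) W C i := by
  have cotton : gradBilinForm C i = 2 * gradBilinForm DP i := gradBilinForm_cotton hC i
  have weyl : gradCurvForm DW i = -4 * metricForm n * gradBilinForm DP i := by
    rw [gradCurvForm_weyl hBianchi, cotton]
    ring
  have xi : xiTerm1 (K := K) W C i = 1 / (K + 1).factorial *
      (2 * contraction n (gradBilinForm DP i * curvForm W ^ K)) := by
    rw [xiTerm1_eq_contraction, ← gradBilinForm, cotton, mul_assoc, two_mul, map_add, ← two_mul]
  rw [sum_DOmegaT_divergence _ _ _ _ hn i weyl, xi, Nat.add_sub_cancel]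
  push_cast
  ring

lemma sum_DOmegaT_trace {k : ℕ} (hn : n = 2 * k) (i : Fin n) :
    ∑ j, DOmegaT (k := k) W P DW DP i j j =
      ∑ l ∈ Finset.range k, (4 : ℝ) ^ (k - l) / l.factorial *
        contraction n (mulPowDeriv (curvForm W) (curvForm (DW i)) (bilinForm P)
          (bilinForm (DP i)) l (k - l)) := by
  simp only [DOmegaT_eq_sum_contraction]
  rw [Finset.sum_comm]
  refine Finset.sum_congr rfl fun l hl => ?_
  have hlk : l < k := Finset.mem_range.1 hl
  have hkl : (k : ℝ) - l ≠ 0 := sub_ne_zero.2 (by exact_mod_cast hlk.ne')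
  have codegree : (n : ℝ) - (2 * l + (k - l) : ℕ) = (k : ℝ) - l := by
    rw [show 2 * l + (k - l) = k + l by omega, hn]
    push_cast
    ring
  rw [← Finset.mul_sum, ← map_sum, ← Finset.sum_mul, ← metricForm, contraction_metricForm_mul
    (mulPowDeriv_mem_linearForms_pow (curvForm_mem_linearForms_sq W)
      (curvForm_mem_linearForms_sq (DW i)) (bilinForm_mem_linearForms P)
      (bilinForm_mem_linearForms (DP i)) l (k - l)), codegree]
  field_simp

/-- Expand `(W + 4 g P) ^ k` binomially: full contraction turns `g ^ (k - l)` into `(k - l)!`. -/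
lemma DPfA_riemannOfWeylSchouten {k : ℕ} (hn : n = 2 * k) (i : Fin n) :
    DPfA (k := k) (riemannOfWeylSchouten W P)
        (fun e => riemannOfWeylSchouten (DW e) (DP e)) i =
      DPfA (k := k) W DW i + ∑ j, DOmegaT (k := k) W P DW DP i j j := by
  let S : ℕ → DoubleForm n := fun l =>
    mulPowDeriv (curvForm W) (curvForm (DW i)) (bilinForm P) (bilinForm (DP i)) l (k - l)
  have hS (l : ℕ) : S l ∈ linearForms n ^ (2 * l + (k - l)) :=
    mulPowDeriv_mem_linearForms_pow (curvForm_mem_linearForms_sq W)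
      (curvForm_mem_linearForms_sq (DW i)) (bilinForm_mem_linearForms P)
      (bilinForm_mem_linearForms (DP i)) l (k - l)
  have last_term : (4 : ℝ) ^ (k - k) / k.factorial * contraction n (S k) =
      DPfA (k := k) W DW i := by
    simp only [S, mulPowDeriv, DPfA_eq_contraction, Nat.sub_self, pow_zero, Nat.cast_zero,
      zero_mul, add_zero, mul_one]
  rw [DPfA_eq_contraction, curvForm_riemannOfWeylSchouten, curvForm_riemannOfWeylSchouten,
    ← sum_choose_mul_mulPowDeriv]
  simp only [mulPowDeriv_mul_left]
  rw [map_sum, Finset.mul_sum, Finset.sum_congr rfl fun l hl =>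
    contraction_choose_mul_metricForm_pow_mul hn (Finset.mem_range_succ_iff.1 hl) (hS l),
    Finset.sum_range_succ, last_term, sum_DOmegaT_trace _ _ _ _ hn, add_comm]

end Divergence

end DoubleForm

end DoubleForms

open DoubleForm in
theorem divergence_Omega_general (K : ℕ)
    (W : Fin (2 * (K + 1)) → Fin (2 * (K + 1)) → Fin (2 * (K + 1)) → Fin (2 * (K + 1)) → ℝ)
    (P : Fin (2 * (K + 1)) → Fin (2 * (K + 1)) → ℝ)
    (DP : Fin (2 * (K + 1)) → Fin (2 * (K + 1)) → Fin (2 * (K + 1)) → ℝ)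
    (DW : Fin (2 * (K + 1)) → Fin (2 * (K + 1)) → Fin (2 * (K + 1)) → Fin (2 * (K + 1)) →
      Fin (2 * (K + 1)) → ℝ)
    (C : Fin (2 * (K + 1)) → Fin (2 * (K + 1)) → Fin (2 * (K + 1)) → ℝ)
    (hC : ∀ i j k, C i j k = DP i j k - DP j i k)
    (hWBianchi : ∀ i j k l m,
      alt3 (fun a b c => DW a b c l m) i j k
        = -2 * alt3 (fun a b c => alt2 (fun x y => C a b x * kron c y) l m) i j k) :
    (∀ i, ∑ j, DOmegaT (k := K + 1) W P DW DP j i j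
        = 2 * ((K : ℝ) + 1) * xiTerm1 (K := K) W C i)
    ∧ (∀ i, 2 * ((K : ℝ) + 1) *
          (xiTerm1 (K := K) W C i + (1 / (4 * ((K : ℝ) + 1) ^ 2)) * DPfA (k := K + 1) W DW i)
        = ((∑ j, DOmegaT (k := K + 1) W P DW DP j i j)
            - (1 / (2 * ((K : ℝ) + 1))) * (∑ j, DOmegaT (k := K + 1) W P DW DP i j j))
          + (1 / (2 * ((K : ℝ) + 1))) *
            DPfA (k := K + 1) (riemannOfWeylSchouten W P)
              (fun e => riemannOfWeylSchouten (DW e) (DP e)) i) := by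
  have divergence := sum_DOmegaT_divergence_eq_xiTerm1 W P DW DP rfl hC hWBianchi
  refine ⟨divergence, fun i => ?_⟩
  rw [divergence, DPfA_riemannOfWeylSchouten _ _ _ _ rfl]
  field_simp
  ring

/-- in dimension `n = 2k` (`k = K+1`), pointwise in an orthonormal
frame: `∇^j Ω^{(k)}_{ij} = (2k/k!) δ^{j j₂…j_{2k}}_{i i₂…i_{2k}} C_{jj₂}{}^{i₂}
W_{j₃j₄}{}^{i₃i₄} ⋯ W_{j_{2k−1}j_{2k}}{}^{i_{2k−1}i_{2k}}` and consequently
`2k ξ^{(k)}_i = ∇^j(tf Ω^{(k)})_{ij} + (1/(2k)) ∇_i Pf^{(k)}(Rm)`. -/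
theorem divergence_Omega (K : ℕ)
    (W : Fin (2 * (K + 1)) → Fin (2 * (K + 1)) → Fin (2 * (K + 1)) → Fin (2 * (K + 1)) → ℝ)
    (hW1 : ∀ a b c d, W a b c d = - W b a c d)
    (hW2 : ∀ a b c d, W a b c d = - W a b d c)
    (hW3 : ∀ a b c d, W a b c d = W c d a b)
    (hWB : ∀ a b c d, W a b c d + W b c a d + W c a b d = 0)
    (hWtf : ∀ a c, ∑ s, W a s c s = 0)
    (P : Fin (2 * (K + 1)) → Fin (2 * (K + 1)) → ℝ) (hP : ∀ i j, P i j = P j i)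
    (DP : Fin (2 * (K + 1)) → Fin (2 * (K + 1)) → Fin (2 * (K + 1)) → ℝ)
    (hDP : ∀ e i j, DP e i j = DP e j i)
    (DW : Fin (2 * (K + 1)) → Fin (2 * (K + 1)) → Fin (2 * (K + 1)) → Fin (2 * (K + 1)) → Fin (2 * (K + 1)) → ℝ)
    (hDW1 : ∀ e a b c d, DW e a b c d = - DW e b a c d)
    (hDW2 : ∀ e a b c d, DW e a b c d = - DW e a b d c)
    (hDW3 : ∀ e a b c d, DW e a b c d = DW e c d a b)
    (hDWtf : ∀ e a c, ∑ s, DW e a s c s = 0)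
    (C : Fin (2 * (K + 1)) → Fin (2 * (K + 1)) → Fin (2 * (K + 1)) → ℝ)
    (hC : ∀ i j k, C i j k = DP i j k - DP j i k)
    (hWBianchi : ∀ i j k l m,
      alt3 (fun a b c => DW a b c l m) i j k
        = -2 * alt3 (fun a b c => alt2 (fun x y => C a b x * kron c y) l m) i j k) :
    (∀ i, ∑ j, DOmegaT (k := K + 1) W P DW DP j i j
        = 2 * ((K : ℝ) + 1) * xiTerm1 (K := K) W C i)
    ∧ (∀ i, 2 * ((K : ℝ) + 1) *
          (xiTerm1 (K := K) W C i + (1 / (4 * ((K : ℝ) + 1) ^ 2)) * DPfA (k := K + 1) W DW i)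
        = ((∑ j, DOmegaT (k := K + 1) W P DW DP j i j)
            - (1 / (2 * ((K : ℝ) + 1))) * (∑ j, DOmegaT (k := K + 1) W P DW DP i j j))
          + (1 / (2 * ((K : ℝ) + 1))) *
            DPfA (k := K + 1)
              (fun a b c d => W a b c d + P a c * kron b d - P a d * kron b c
                + P b d * kron a c - P b c * kron a d)
              (fun e a b c d => DW e a b c d + DP e a c * kron b d - DP e a d * kron b c
                + DP e b d * kron a c - DP e b c * kron a d) i) :=
  divergence_Omega_general K W P DP DW C hC hWBianchi
end
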